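/- arXiv:math/0412013 — 6 statements merged into one kernel-verified Lean document; each statement's English description precedes it below -/
import Mathlib

section
/- Let A be a connected graded k-algebra and let U be a division k-algebra. Then the (ungraded, left) global dimension of A ⊗_k U equals the projective dimension of the trivial module k = A/A_{≥1} as a left A-module. In particular, gldim(A ⊗_k U) = gldim A for every division k-algebra U. -/
open CategoryTheory Limits TensorProduct

universe u

/-- The injective dimension of a module `M`, defined as the least `n : ℕ∞` for which
there is an injective resolution of `M` that vanishes in all cohomological degrees `> n`. -/
noncomputable def ModuleCat.injDim {R : Type u} [Ring R] (M : ModuleCat.{u} R) : ℕ∞ :=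
  sInf {n : ℕ∞ | ∃ I : InjectiveResolution M, ∀ i : ℕ, n < (i : ℕ∞) → IsZero (I.cocomplex.X i)}

/-- The projective dimension of a module `M`, defined as the least `n : ℕ∞` for which
there is a projective resolution of `M` that vanishes in all homological degrees `> n`. -/
noncomputable def ModuleCat.projDim {R : Type u} [Ring R] (M : ModuleCat.{u} R) : ℕ∞ :=
  sInf {n : ℕ∞ | ∃ P : ProjectiveResolution M, ∀ i : ℕ, n < (i : ℕ∞) → IsZero (P.complex.X i)}

/-- The injective dimension of a ring as a left module over itself. -/
noncomputable def Ring.selfInjDim (R : Type u) [Ring R] : ℕ∞ :=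
  ModuleCat.injDim (ModuleCat.of R R)

/-- The left global dimension of a ring: the supremum of the projective dimensions
of all left `R`-modules. -/
noncomputable def Ring.globalDim (R : Type u) [Ring R] : ℕ∞ :=
  ⨆ M : ModuleCat.{u} R, M.projDim


namespace GD

section Basics
variable {R : Type u} [Ring R]

/-- Projective dimension `< n`, unbundled. -/
def PD (R : Type u) [Ring R] (M : Type u) [AddCommGroup M] [Module R M] (n : ℕ) : Prop :=
  HasProjectiveDimensionLT (ModuleCat.of R M) n

variable {X Y Z : Type u} [AddCommGroup X] [AddCommGroup Y] [AddCommGroup Z]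
  [Module R X] [Module R Y] [Module R Z]

lemma ses (f : X →ₗ[R] Y) (g : Y →ₗ[R] Z) (hf : Function.Injective f)
    (hg : Function.Surjective g) (hfg : Function.Exact f g) :
    (ShortComplex.mk (ModuleCat.ofHom f) (ModuleCat.ofHom g)
      (by ext x; exact hfg.apply_apply_eq_zero x)).ShortExact := by
  refine { exact := ?_, mono_f := ?_, epi_g := ?_ }
  · rw [ShortComplex.ShortExact.moduleCat_exact_iff_function_exact]
    exact hfg
  · rw [ModuleCat.mono_iff_injective]; exact hf
  · rw [ModuleCat.epi_iff_surjective]; exact hg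

lemma PD.zero_iff : PD R X 0 ↔ Subsingleton X := by
  unfold PD
  rw [hasProjectiveDimensionLT_zero_iff_isZero, ModuleCat.isZero_iff_subsingleton]

lemma PD.one_iff : PD R X 1 ↔ Module.Projective R X := by
  unfold PD
  rw [← projective_iff_hasProjectiveDimensionLT_one, ← IsProjective.iff_projective]

lemma PD.mono {m n : ℕ} (h : m ≤ n) (hX : PD R X m) : PD R X n := by
  unfold PD at *
  exact hasProjectiveDimensionLT_of_ge _ m n h

lemma PD.retract (i : X →ₗ[R] Y) (r : Y →ₗ[R] X) (h : ∀ x, r (i x) = x) {n : ℕ}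
    (hY : PD R Y n) : PD R X n := by
  unfold PD at *
  have : Retract (ModuleCat.of R X) (ModuleCat.of R Y) :=
    { i := ModuleCat.ofHom i, r := ModuleCat.ofHom r, retract := by ext x; exact h x }
  exact this.hasProjectiveDimensionLT n

lemma PD.equiv (e : X ≃ₗ[R] Y) {n : ℕ} (hX : PD R X n) : PD R Y n :=
  PD.retract e.symm.toLinearMap e.toLinearMap (by simp) hX

lemma PD.up (f : X →ₗ[R] Y) (g : Y →ₗ[R] Z) (hf : Function.Injective f)
    (hg : Function.Surjective g) (hfg : Function.Exact f g) [Module.Projective R Y]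
    {n : ℕ} (h : PD R X n) : PD R Z (n + 1) :=
  (ses f g hf hg hfg).hasProjectiveDimensionLT_X₃ n h
    (PD.mono (by omega) (PD.one_iff.2 ‹_›))

lemma PD.down (f : X →ₗ[R] Y) (g : Y →ₗ[R] Z) (hf : Function.Injective f)
    (hg : Function.Surjective g) (hfg : Function.Exact f g) [Module.Projective R Y]
    {n : ℕ} (h : PD R Z (n + 2)) : PD R X (n + 1) :=
  (ses f g hf hg hfg).hasProjectiveDimensionLT_X₁ (n+1)
    (PD.mono (by omega) (PD.one_iff.2 ‹_›)) h

lemma PD.ker_up (g : Y →ₗ[R] Z) (hg : Function.Surjective g) [Module.Projective R Y]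
    {n : ℕ} (h : PD R (LinearMap.ker g) n) : PD R Z (n + 1) :=
  PD.up (LinearMap.ker g).subtype g (Submodule.subtype_injective _) hg
    (LinearMap.exact_subtype_ker_map g) h

lemma PD.ker_down (g : Y →ₗ[R] Z) (hg : Function.Surjective g) [Module.Projective R Y]
    {n : ℕ} (h : PD R Z (n + 2)) : PD R (LinearMap.ker g) (n + 1) :=
  PD.down (LinearMap.ker g).subtype g (Submodule.subtype_injective _) hg
    (LinearMap.exact_subtype_ker_map g) h

end Basics

section ProjDim
variable {R : Type u} [Ring R]

lemma pd_of_resolution (M : ModuleCat.{u} R) (n : ℕ) (P : ProjectiveResolution M)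
    (hP : ∀ i : ℕ, n < i → IsZero (P.complex.X i)) : PD R M (n + 1) := by
  have proj : ∀ i, Module.Projective R (P.complex.X i) := fun i => by
    have := P.projective i
    exact (IsProjective.iff_projective _).2 this
  have key : ∀ m j, j + m = n → PD R (LinearMap.range (P.complex.d (j+1) j).hom) m := by
    intro m
    induction m with
    | zero =>
      intro j hj
      rw [PD.zero_iff]
      have h0 := hP (j+1) (by omega)
      rw [ModuleCat.isZero_iff_subsingleton] at h0
      refine ⟨fun x y => ?_⟩
      obtain ⟨_, a, rfl⟩ := x
      obtain ⟨_, b, rfl⟩ := y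
      rw [Subsingleton.elim a b]
    | succ m ih =>
      intro j hj
      have h1 := ih (j+1) (by omega)
      refine PD.up (Submodule.subtype _) (P.complex.d (j+1) j).hom.rangeRestrict
        (Submodule.subtype_injective _) (LinearMap.surjective_rangeRestrict _) ?_ h1
      have hex := (ShortComplex.ShortExact.moduleCat_exact_iff_function_exact _).1 (P.exact_succ j)
      rw [LinearMap.exact_iff] at hex ⊢
      rw [LinearMap.ker_rangeRestrict, Submodule.range_subtype]
      exact hex
  have h0 := key n 0 (by omega)
  have hs : Function.Surjective (P.π.f 0).hom := by
    have : Epi (P.π.f 0) := inferInstance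
    exact (ModuleCat.epi_iff_surjective _).1 this
  have hex : (ShortComplex.mk _ _ P.complex_d_comp_π_f_zero).Exact :=
    P.exact₀
  have hex' := (ShortComplex.ShortExact.moduleCat_exact_iff_function_exact _).1 hex
  have e : ((ChainComplex.single₀ (ModuleCat R)).obj M).X 0 ≅ M := eqToIso (by simp)
  refine PD.equiv e.toLinearEquiv ?_
  refine PD.up (Submodule.subtype _) (P.π.f 0).hom
        (Submodule.subtype_injective _) hs ?_ h0
  rw [LinearMap.exact_iff] at hex' ⊢
  rw [Submodule.range_subtype]
  exact hex'

lemma resolution_of_pd (n : ℕ) : ∀ (M : ModuleCat.{u} R), PD R M (n + 1) →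
    ∃ P : ProjectiveResolution M, ∀ i : ℕ, n < i → IsZero (P.complex.X i) := by
  induction n with
  | zero =>
    intro M hM
    have : Projective M := projective_iff_hasProjectiveDimensionLT_one.2 hM
    refine ⟨ProjectiveResolution.self M, fun i hi => ?_⟩
    exact HomologicalComplex.isZero_single_obj_X _ _ _ _ (by omega)
  | succ n ih =>
    intro M hM
    obtain ⟨⟨F, f⟩⟩ := ModuleCat.enoughProjectives.1 M
    have hS : (ShortComplex.mk (kernel.ι f) f (kernel.condition f)).ShortExact :=
      { exact := ShortComplex.exact_kernel f }
    have hK := (hS.hasProjectiveDimensionLT_X₃_iff n ‹_›).mp hM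
    obtain ⟨Q, hQ⟩ := ih (kernel f) hK
    obtain ⟨q, hq, hex, hepi⟩ : ∃ q : Q.complex.X 0 ⟶ kernel f,
        ∃ hq : Q.complex.d 1 0 ≫ q = 0, (ShortComplex.mk _ _ hq).Exact ∧ Epi q :=
      ⟨Q.π.f 0, Q.complex_d_comp_π_f_zero, Q.exact₀, inferInstanceAs (Epi (Q.π.f 0))⟩
    have w : Q.complex.d 1 0 ≫ (q ≫ kernel.ι f) = 0 := by
      rw [← Category.assoc, hq, zero_comp]
    have w1 : (q ≫ kernel.ι f) ≫ f = 0 := by simp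
    have hex1 : (ShortComplex.mk _ _ w).Exact := by
      rw [ShortComplex.ShortExact.moduleCat_exact_iff_function_exact] at hex ⊢
      have hi : Function.Injective (kernel.ι f) :=
        (ModuleCat.mono_iff_injective _).1 inferInstance
      intro y
      rw [← hex y]
      constructor
      · intro h
        apply hi
        rw [map_zero]
        exact h
      · intro h
        change kernel.ι f (q y) = 0
        rw [show q y = 0 from h, map_zero]
    have hex0 : (ShortComplex.mk _ _ w1).Exact := by
      have h2 := hS.exact
      rw [ShortComplex.ShortExact.moduleCat_exact_iff_function_exact] at h2 ⊢
      have hq' : Function.Surjective q := (ModuleCat.epi_iff_surjective _).1 hepi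
      intro y
      rw [h2 y]
      constructor
      · rintro ⟨x, rfl⟩
        obtain ⟨z, rfl⟩ := hq' x
        exact ⟨z, rfl⟩
      · rintro ⟨z, rfl⟩
        exact ⟨q z, rfl⟩
    have w' : (ChainComplex.augment Q.complex (q ≫ kernel.ι f) w).d 1 0 ≫ f = 0 := w1
    refine ⟨{ complex := ChainComplex.augment Q.complex (q ≫ kernel.ι f) w
              projective := ?_
              π := (ChainComplex.toSingle₀Equiv _ _).symm ⟨f, w'⟩
              quasiIso := ⟨?_⟩ }, ?_⟩
    · rintro (_ | i)
      · assumption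
      · exact Q.projective i
    · rintro (_ | i)
      · rw [ChainComplex.quasiIsoAt₀_iff, ShortComplex.quasiIso_iff_of_zeros']
        · exact ⟨hex0, ‹Epi f›⟩
        all_goals rfl
      · rw [quasiIsoAt_iff_exactAt']
        · rw [HomologicalComplex.exactAt_iff' _ (i + 1 + 1) (i + 1) i (by simp) (by simp)]
          cases i with
          | zero => exact hex1
          | succ i => exact Q.exact_succ i
        · apply ChainComplex.exactAt_succ_single_obj
    · rintro (_ | i) hi
      · omega
      · exact hQ i (by omega)

lemma projDim_le_iff (M : ModuleCat.{u} R) (n : ℕ) :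
    M.projDim ≤ n ↔ PD R M (n + 1) := by
  constructor
  · intro h
    have hne : {n : ℕ∞ | ∃ P : ProjectiveResolution M, ∀ i : ℕ, n < (i : ℕ∞) →
        IsZero (P.complex.X i)}.Nonempty :=
      ⟨⊤, ProjectiveResolution.of M, fun i hi => absurd hi (by simp)⟩
    obtain ⟨P, hP⟩ := csInf_mem hne
    exact pd_of_resolution M n P fun i hi => hP i (lt_of_le_of_lt h (by exact_mod_cast hi))
  · intro h
    obtain ⟨P, hP⟩ := resolution_of_pd n M h
    exact sInf_le ⟨P, fun i hi => hP i (by exact_mod_cast hi)⟩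

lemma globalDim_le_iff (n : ℕ) :
    Ring.globalDim R ≤ n ↔ ∀ (M : ModuleCat.{u} R), PD R M (n + 1) := by
  unfold Ring.globalDim
  rw [iSup_le_iff]
  exact forall_congr' fun M => projDim_le_iff M n

end ProjDim
end GD

namespace GD

/-- A grading of an abelian group by the family of its projections. -/
structure GrGroup (W : Type u) [AddCommGroup W] where
  p : ℕ → W →+ W
  pp : ∀ i j x, p i (p j x) = if i = j then p j x else 0
  fin : ∀ x, ∃ n, ∀ m, n ≤ m → x = ∑ i ∈ Finset.range m, p i x

/-- A grading of a ring. -/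
structure GrRing (R : Type u) [Ring R] extends GrGroup R where
  mul : ∀ i j r s, p i r = r → p j s = s → p (i + j) (r * s) = r * s

/-- A grading of a module over a graded ring. -/
structure GrMod {R : Type u} [Ring R] (G : GrRing R) (W : Type u) [AddCommGroup W] [Module R W]
    extends GrGroup W where
  smul : ∀ i j r x, G.p i r = r → p j x = x → p (i + j) (r • x) = r • x

lemma GrGroup.hom {W : Type u} [AddCommGroup W] (g : GrGroup W) {d : ℕ} {y : W}
    (h : g.p d y = y) (j : ℕ) : g.p j y = if j = d then y else 0 := by
  have := g.pp j d y
  rwa [h] at this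

lemma GrGroup.p_idem {W : Type u} [AddCommGroup W] (g : GrGroup W) (d : ℕ) (y : W) :
    g.p d (g.p d y) = g.p d y := by
  rw [g.pp, if_pos rfl]

lemma GrGroup.eq_zero {W : Type u} [AddCommGroup W] (g : GrGroup W) (y : W)
    (h : ∀ d, g.p d y = 0) : y = 0 := by
  obtain ⟨n, hn⟩ := g.fin y
  rw [hn n le_rfl]
  exact Finset.sum_eq_zero fun i _ => h i

section
variable {R : Type u} [Ring R] {G : GrRing R} {W : Type u} [AddCommGroup W] [Module R W]

lemma GrMod.p_smul_left (g : GrMod G W) {i : ℕ} {r : R} (hr : G.p i r = r) (x : W) (j : ℕ) :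
    g.p j (r • x) = if i ≤ j then r • g.p (j - i) x else 0 := by
  obtain ⟨n, hn⟩ := g.fin x
  have hx := hn (max n (j + 1)) (le_max_left _ _)
  have h1 : g.p j (r • x) = ∑ l ∈ Finset.range (max n (j + 1)),
      if j = i + l then r • g.p l x else 0 := by
    conv_lhs => rw [hx, Finset.smul_sum, map_sum]
    refine Finset.sum_congr rfl fun l _ => ?_
    exact g.toGrGroup.hom (g.smul i l r _ hr (g.toGrGroup.p_idem l x)) j
  rw [h1]
  split_ifs with hij
  · rw [Finset.sum_eq_single (j - i)]
    · rw [if_pos (by omega)]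
    · intro b _ hb
      rw [if_neg (by omega)]
    · intro h
      exfalso
      apply h
      rw [Finset.mem_range]
      have := le_max_right n (j + 1)
      omega
  · exact Finset.sum_eq_zero fun l _ => if_neg (by omega)

lemma GrMod.p_smul_right (g : GrMod G W) {d : ℕ} {x : W} (hx : g.p d x = x) (r : R) (j : ℕ) :
    g.p j (r • x) = if d ≤ j then G.p (j - d) r • x else 0 := by
  obtain ⟨n, hn⟩ := G.fin r
  have hr := hn (max n (j + 1)) (le_max_left _ _)
  have h1 : g.p j (r • x) = ∑ l ∈ Finset.range (max n (j + 1)),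
      if j = l + d then G.p l r • x else 0 := by
    conv_lhs => rw [hr, Finset.sum_smul, map_sum]
    refine Finset.sum_congr rfl fun l _ => ?_
    exact g.toGrGroup.hom (g.smul l d _ x (G.toGrGroup.p_idem l r) hx) j
  rw [h1]
  split_ifs with hij
  · rw [Finset.sum_eq_single (j - d)]
    · rw [if_pos (by omega)]
    · intro b _ hb
      rw [if_neg (by omega)]
    · intro h
      exfalso
      apply h
      rw [Finset.mem_range]
      have := le_max_right n (j + 1)
      omega
  · exact Finset.sum_eq_zero fun l _ => if_neg (by omega)

/-- Shifted projection. -/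
noncomputable def GrRing.q (G : GrRing R) (d j : ℕ) : R →+ R := if d ≤ j then G.p (j - d) else 0

lemma GrMod.p_smul_right' (g : GrMod G W) {d : ℕ} {x : W} (hx : g.p d x = x) (r : R) (j : ℕ) :
    g.p j (r • x) = G.q d j r • x := by
  rw [g.p_smul_right hx, GrRing.q]
  split_ifs <;> simp

/-- The projections on a graded free module. -/
noncomputable def freeP (G : GrRing R) {S : Type u} (deg : S → ℕ) (j : ℕ) :
    (S →₀ R) →+ (S →₀ R) :=
  Finsupp.liftAddHom fun s => (Finsupp.singleAddHom s).comp (G.q (deg s) j)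

lemma freeP_single (G : GrRing R) {S : Type u} (deg : S → ℕ) (j : ℕ) (s : S) (r : R) :
    freeP G deg j (Finsupp.single s r) = Finsupp.single s (G.q (deg s) j r) := by
  simp [freeP]

lemma freeP_apply (G : GrRing R) {S : Type u} (deg : S → ℕ) (j : ℕ) (s : S) (f : S →₀ R) :
    freeP G deg j f s = G.q (deg s) j (f s) := by
  classical
  induction f using Finsupp.induction_linear with
  | zero => simp
  | add f g hf hg => simp [hf, hg]
  | single t r =>
    rw [freeP_single, Finsupp.single_apply, Finsupp.single_apply]
    split_ifs with h
    · rw [h]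
    · simp

/-- The graded free module. -/
noncomputable def freeGr (G : GrRing R) {S : Type u} (deg : S → ℕ) : GrMod G (S →₀ R) where
  p := freeP G deg
  pp i j f := by
    ext s
    rw [freeP_apply, freeP_apply]
    have : (if i = j then freeP G deg j f else 0) s =
      if i = j then G.q (deg s) j (f s) else 0 := by
      split_ifs
      · rw [freeP_apply]
      · rfl
    rw [this]
    unfold GrRing.q
    by_cases h1 : deg s ≤ i <;> by_cases h2 : deg s ≤ j
    · rw [if_pos h1, if_pos h2, G.pp]
      by_cases h : i = j
      · rw [if_pos h, if_pos (by omega)]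
      · rw [if_neg h, if_neg (by omega)]
    · simp [h2]
    · rw [if_neg h1]
      by_cases h : i = j
      · omega
      · rw [if_neg h]; rfl
    · simp [h2]
  fin f := by
    induction f using Finsupp.induction_linear with
    | zero => exact ⟨0, by simp⟩
    | add f g hf hg =>
      obtain ⟨n, hn⟩ := hf
      obtain ⟨m, hm⟩ := hg
      refine ⟨max n m, fun l hl => ?_⟩
      simp only [map_add, Finset.sum_add_distrib]
      rw [← hn l (le_trans (le_max_left _ _) hl), ← hm l (le_trans (le_max_right _ _) hl)]
    | single s r =>
      obtain ⟨n, hn⟩ := G.fin r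
      refine ⟨deg s + n, fun m hm => ?_⟩
      simp only [freeP_single]
      refine Eq.trans (congrArg (Finsupp.singleAddHom s) ?_) (map_sum (Finsupp.singleAddHom s) (fun i => G.q (deg s) i r) (Finset.range m))
      obtain ⟨l, rfl⟩ : ∃ l, m = deg s + l := ⟨m - deg s, by omega⟩
      rw [Finset.sum_range_add, Finset.sum_eq_zero, zero_add]
      · conv_lhs => rw [hn l (by omega)]
        refine Finset.sum_congr rfl fun i _ => ?_
        simp [GrRing.q]
      · intro i hi
        rw [Finset.mem_range] at hi
        rw [GrRing.q, if_neg (by omega)]; rfl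
  smul i j r f hr hf := by
    ext s
    rw [freeP_apply, Finsupp.smul_apply, smul_eq_mul]
    have hs : freeP G deg j f s = f s := by rw [hf]
    rw [freeP_apply] at hs
    unfold GrRing.q at hs ⊢
    by_cases h : deg s ≤ j
    · rw [if_pos h] at hs
      rw [if_pos (by omega), show i + j - deg s = i + (j - deg s) by omega]
      exact G.mul _ _ _ _ hr hs
    · rw [if_neg h] at hs
      rw [← hs]
      simp

lemma freeGr_p (G : GrRing R) {S : Type u} (deg : S → ℕ) : (freeGr G deg).p = freeP G deg := rfl

variable {W0 : Type u} [AddCommGroup W0] [Module R W0]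

/-- A filtration of `W` with associated graded module `W0`, encoded by symbols. -/
structure Filt (g : GrMod G W0) (W : Type u) [AddCommGroup W] [Module R W] where
  Sym : ℕ → AddSubgroup (W × W0)
  deg : ∀ j w x, (w, x) ∈ Sym j → g.p j x = x
  surj : ∀ j x, g.p j x = x → ∃ w, (w, x) ∈ Sym j
  zero : ∀ w, (w, 0) ∈ Sym 0 → w = 0
  pred : ∀ j w, (w, 0) ∈ Sym (j + 1) → ∃ y, (w, y) ∈ Sym j
  succ : ∀ j w y, (w, y) ∈ Sym j → (w, 0) ∈ Sym (j + 1)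
  smul : ∀ i j r w x, G.p i r = r → (w, x) ∈ Sym j → (r • w, r • x) ∈ Sym (i + j)
  exh : ∀ w, ∃ j x, (w, x) ∈ Sym j
  uniq : ∀ j x, (0, x) ∈ Sym j → x = 0

lemma Filt.succ_le {g : GrMod G W0} (F : Filt g W) {j l : ℕ} (h : j < l) {w : W} {y : W0}
    (hw : (w, y) ∈ F.Sym j) : (w, 0) ∈ F.Sym l := by
  induction l with
  | zero => omega
  | succ l ih =>
    rcases Nat.lt_succ_iff_lt_or_eq.1 h with h | rfl
    · exact F.succ _ _ _ (ih h)
    · exact F.succ _ _ _ hw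

lemma Filt.subsingleton {g : GrMod G W0} (F : Filt g W) [Subsingleton W0] : Subsingleton W := by
  have key : ∀ j w x, (w, x) ∈ F.Sym j → w = 0 := by
    intro j
    induction j with
    | zero =>
      intro w x h
      rw [Subsingleton.elim x 0] at h
      exact F.zero w h
    | succ j ih =>
      intro w x h
      rw [Subsingleton.elim x 0] at h
      obtain ⟨y, hy⟩ := F.pred j w h
      exact ih w y hy
  refine subsingleton_of_forall_eq 0 fun w => ?_
  obtain ⟨j, x, h⟩ := F.exh w
  exact key j w x h

end

section Cover

variable {R : Type u} [Ring R] {G : GrRing R} {W W0 : Type u} [AddCommGroup W] [Module R W]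
  [AddCommGroup W0] [Module R W0] (g : GrMod G W0) {S : Type u} (deg : S → ℕ) (gen : S → W0)
  (hgen : ∀ s, g.p (deg s) (gen s) = gen s)

include hgen in
lemma lc_p (j : ℕ) (f : S →₀ R) :
    Finsupp.linearCombination R gen (freeP G deg j f) =
      g.p j (Finsupp.linearCombination R gen f) := by
  induction f using Finsupp.induction_linear with
  | zero => simp
  | add f g hf hg => simp [hf, hg]
  | single s r =>
    rw [freeP_single, Finsupp.linearCombination_single, Finsupp.linearCombination_single,
      g.p_smul_right' (hgen s)]

/-- The grading of the kernel of a graded cover. -/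
noncomputable def kerGr : GrMod G (LinearMap.ker (Finsupp.linearCombination R gen)) where
  p j := AddMonoidHom.mk' (fun f => ⟨freeP G deg j f.1, by
      rw [LinearMap.mem_ker, lc_p g deg gen hgen, LinearMap.mem_ker.1 f.2, map_zero]⟩)
    (fun a b => by ext1; simp)
  pp i j f := by
    ext1
    have := (freeGr G deg).pp i j f.1
    simp only [freeGr_p] at this
    refine this.trans ?_
    split_ifs <;> rfl
  fin f := by
    obtain ⟨n, hn⟩ := (freeGr G deg).fin f.1
    refine ⟨n, fun m hm => ?_⟩
    ext1
    refine (hn m hm).trans ?_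
    rw [AddSubmonoidClass.coe_finsetSum]
    rfl
  smul i j r f hr hf := by
    ext1
    exact (freeGr G deg).smul i j r f.1 hr (congrArg Subtype.val hf)

lemma kerGr_p (j : ℕ) (f) : ((kerGr g deg gen hgen).p j f).1 = freeP G deg j f.1 := rfl

variable (F : Filt g W) (gen' : S → W) (hgen' : ∀ s, (gen' s, gen s) ∈ F.Sym (deg s))

include hgen' in
lemma sym_hom (j : ℕ) (f : S →₀ R) :
    (Finsupp.linearCombination R gen' (freeP G deg j f),
      Finsupp.linearCombination R gen (freeP G deg j f)) ∈ F.Sym j := by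
  induction f using Finsupp.induction_linear with
  | zero => simp only [map_zero, AddMonoidHom.zero_apply, zero_smul]; exact (F.Sym j).zero_mem
  | add f g hf hg => simpa using (F.Sym j).add_mem hf hg
  | single s r =>
    rw [freeP_single, Finsupp.linearCombination_single, Finsupp.linearCombination_single]
    unfold GrRing.q
    split_ifs with h
    · have := F.smul (j - deg s) (deg s) (G.p (j - deg s) r) _ _ (G.toGrGroup.p_idem _ _) (hgen' s)
      rwa [show j - deg s + deg s = j by omega] at this
    · simp only [map_zero, AddMonoidHom.zero_apply, zero_smul]; exact (F.Sym j).zero_mem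

include hgen' in
lemma sym_compat (j : ℕ) (f : S →₀ R) (hf : ∀ l, j < l → freeP G deg l f = 0) :
    (Finsupp.linearCombination R gen' f,
      Finsupp.linearCombination R gen (freeP G deg j f)) ∈ F.Sym j := by
  have hsum : f = ∑ i ∈ Finset.range (j + 1), freeP G deg i f := by
    obtain ⟨n, hn⟩ := (freeGr G deg).fin f
    have := hn (max n (j + 1)) (le_max_left _ _)
    rw [freeGr_p] at this
    conv_lhs => rw [this]
    symm
    apply Finset.sum_subset
    · intro i hi
      rw [Finset.mem_range] at *
      exact lt_of_lt_of_le hi (le_max_right _ _)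
    · intro i _ hi
      rw [Finset.mem_range] at hi
      exact hf i (by omega)
  have h1 : (∑ i ∈ Finset.range j, Finsupp.linearCombination R gen' (freeP G deg i f), (0 : W0))
      ∈ F.Sym j := by
    have : ∑ i ∈ Finset.range j, ((Finsupp.linearCombination R gen' (freeP G deg i f) : W),
        (0 : W0)) ∈ F.Sym j :=
      (F.Sym j).sum_mem fun i hi =>
        F.succ_le (Finset.mem_range.1 hi) (sym_hom g deg gen F gen' hgen' i f)
    convert this using 1
    refine Prod.ext ?_ ?_
    · rw [Prod.fst_sum]
    · rw [Prod.snd_sum]; simp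
  have h2 := (F.Sym j).add_mem h1 (sym_hom g deg gen F gen' hgen' j f)
  rw [Prod.mk_add_mk, zero_add, ← Finset.sum_range_succ, ← map_sum, ← hsum] at h2
  exact h2

variable (hsurj : Function.Surjective (Finsupp.linearCombination R gen))

include hgen hgen' hsurj in
lemma strict (j : ℕ) : ∀ (w : W) (y : W0), (w, y) ∈ F.Sym j →
    ∃ f : S →₀ R, (∀ l, j < l → freeP G deg l f = 0) ∧
      Finsupp.linearCombination R gen' f = w := by
  have step : ∀ j (w : W) (y : W0), (w, y) ∈ F.Sym j → ∃ f : S →₀ R, freeP G deg j f = f ∧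
      (w - Finsupp.linearCombination R gen' f, 0) ∈ F.Sym j := by
    intro j w y h
    obtain ⟨f, hf⟩ := hsurj y
    have h1 := sym_hom g deg gen F gen' hgen' j f
    refine ⟨freeP G deg j f, (freeGr G deg).toGrGroup.p_idem j f, ?_⟩
    rw [lc_p g deg gen hgen, hf, F.deg _ _ _ h] at h1
    simpa using (F.Sym j).sub_mem h h1
  induction j with
  | zero =>
    intro w y h
    obtain ⟨f, hf, h1⟩ := step 0 w y h
    refine ⟨f, fun l hl => ?_, (sub_eq_zero.1 (F.zero _ h1)).symm⟩
    exact ((freeGr G deg).toGrGroup.hom hf l).trans (if_neg (by omega))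
  | succ j ih =>
    intro w y h
    obtain ⟨f, hf, h1⟩ := step (j+1) w y h
    obtain ⟨z, hz⟩ := F.pred _ _ h1
    obtain ⟨f', hf', h2⟩ := ih _ _ hz
    refine ⟨f + f', fun l hl => ?_, by rw [map_add, h2]; abel⟩
    rw [map_add, hf' l (by omega), add_zero]
    exact ((freeGr G deg).toGrGroup.hom hf l).trans (if_neg (by omega))

include hgen hgen' hsurj in
lemma surj' : Function.Surjective (Finsupp.linearCombination R gen') := by
  intro w
  obtain ⟨j, x, h⟩ := F.exh w
  obtain ⟨f, _, hf⟩ := strict g deg gen hgen F gen' hgen' hsurj j w x h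
  exact ⟨f, hf⟩

include hgen' in
lemma ker_lead (j : ℕ) (f : S →₀ R) (hf : ∀ l, j < l → freeP G deg l f = 0)
    (hk : Finsupp.linearCombination R gen' f = 0) :
    Finsupp.linearCombination R gen (freeP G deg j f) = 0 := by
  have := sym_compat g deg gen F gen' hgen' j f hf
  rw [hk] at this
  exact F.uniq _ _ this

/-- The induced filtration on the kernel. -/
noncomputable def kerFilt : Filt (kerGr g deg gen hgen)
    (LinearMap.ker (Finsupp.linearCombination R gen')) where
  Sym j :=
    { carrier := {z | freeP G deg j z.1.1 = z.2.1 ∧ ∀ l, j < l → freeP G deg l z.1.1 = 0}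
      add_mem' := by
        rintro ⟨a, b⟩ ⟨c, d⟩ ⟨h1, h2⟩ ⟨h3, h4⟩
        refine ⟨?_, fun l hl => ?_⟩
        · simp_all
        · simp [h2 l hl, h4 l hl]
      zero_mem' := by simp
      neg_mem' := by
        rintro ⟨a, b⟩ ⟨h1, h2⟩
        refine ⟨?_, fun l hl => ?_⟩
        · simp_all
        · simp [h2 l hl] }
  deg := by
    rintro j w x ⟨h1, h2⟩
    ext1
    rw [kerGr_p]
    change freeP G deg j w.1 = x.1 at h1
    rw [← h1]
    exact (freeGr G deg).toGrGroup.p_idem j w.1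
  surj := by
    intro j x hx
    have hx' : freeP G deg j x.1 = x.1 := congrArg Subtype.val hx
    have hx0 : ∀ l, j ≠ l → freeP G deg l x.1 = 0 := fun l hl =>
      ((freeGr G deg).toGrGroup.hom hx' l).trans (if_neg (by omega))
    have h1 := sym_hom g deg gen F gen' hgen' j x.1
    rw [hx', LinearMap.mem_ker.1 x.2] at h1
    cases j with
    | zero => exact ⟨⟨x.1, F.zero _ h1⟩, hx', fun l hl => hx0 l (by omega)⟩
    | succ j =>
      obtain ⟨y, hy⟩ := F.pred _ _ h1
      obtain ⟨f, hf, h2⟩ := strict g deg gen hgen F gen' hgen' hsurj j _ _ hy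
      refine ⟨⟨x.1 - f, by rw [LinearMap.mem_ker, map_sub, h2, sub_self]⟩, ?_, fun l hl => ?_⟩
      · change freeP G deg (j+1) (x.1 - f) = x.1
        rw [map_sub, hx', hf _ (by omega), sub_zero]
      · change freeP G deg l (x.1 - f) = 0
        rw [map_sub, hx0 _ (by omega), hf _ (by omega), sub_zero]
  zero := by
    rintro w ⟨h1, h2⟩
    ext1
    refine (freeGr G deg).toGrGroup.eq_zero _ fun d => ?_
    rcases Nat.eq_zero_or_pos d with rfl | hd
    · exact h1
    · exact h2 d hd
  pred := by
    rintro j w ⟨h1, h2⟩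
    have h3 : ∀ l, j < l → freeP G deg l w.1 = 0 := fun l hl => by
      rcases Nat.lt_or_eq_of_le (Nat.succ_le_of_lt hl) with h | h
      · exact h2 l h
      · rw [← h]; exact h1
    exact ⟨⟨freeP G deg j w.1, ker_lead g deg gen F gen' hgen' j w.1 h3 w.2⟩, rfl, h3⟩
  succ := by
    rintro j w y ⟨h1, h2⟩
    exact ⟨h2 _ (by omega), fun l hl => h2 l (by omega)⟩
  smul := by
    rintro i j r w x hr ⟨h1, h2⟩
    have key : ∀ l, freeP G deg l (r • w.1) = if i ≤ l then r • freeP G deg (l - i) w.1 else 0 :=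
      fun l => (freeGr G deg).p_smul_left hr w.1 l
    refine ⟨?_, fun l hl => ?_⟩
    · change freeP G deg (i + j) (r • w.1) = r • x.1
      rw [key, if_pos (by omega), Nat.add_sub_cancel_left]
      exact congrArg (r • ·) h1
    · change freeP G deg l (r • w.1) = 0
      have h3 : freeP G deg (l - i) w.1 = 0 := h2 _ (by omega)
      rw [key, if_pos (by omega), h3, smul_zero]
  exh := by
    intro w
    obtain ⟨n, hn⟩ := (freeGr G deg).fin w.1
    have h3 : ∀ l, n < l → freeP G deg l w.1 = 0 := by
      intro l hl
      have h4 := hn l hl.le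
      have h5 := hn (l+1) (by omega)
      rw [Finset.sum_range_succ, ← h4] at h5
      exact left_eq_add.1 h5
    exact ⟨n, ⟨freeP G deg n w.1, ker_lead g deg gen F gen' hgen' n w.1 h3 w.2⟩, rfl, h3⟩
  uniq := by
    rintro j x ⟨h1, h2⟩
    ext1
    refine h1.symm.trans ?_
    change freeP G deg j 0 = 0
    exact map_zero _

variable (hmin : ∀ f : S →₀ R, Finsupp.linearCombination R gen f = 0 → ∀ s, G.p 0 (f s) = 0)

include deg hmin hsurj in
lemma ker_eq_zero (hproj : Module.Projective R W0) :
    Subsingleton (LinearMap.ker (Finsupp.linearCombination R gen)) := by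
  obtain ⟨σ, hσ⟩ := Module.projective_lifting_property (Finsupp.linearCombination R gen)
    LinearMap.id hsurj
  have hσ' : ∀ x, Finsupp.linearCombination R gen (σ x) = x := fun x => LinearMap.congr_fun hσ x
  have key : ∀ m, ∀ f : S →₀ R, Finsupp.linearCombination R gen f = 0 → ∀ l, l < m →
      freeP G deg l f = 0 := by
    intro m
    induction m with
    | zero => intro _ _ l hl; omega
    | succ m ih =>
      intro f hf l hl
      let τ : (S →₀ R) →ₗ[R] (S →₀ R) :=
        LinearMap.id - σ.comp (Finsupp.linearCombination R gen)
      have hτ : ∀ x, Finsupp.linearCombination R gen (τ x) = 0 := fun x => by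
        simp [τ, hσ']
      have hf1 : f = ∑ s ∈ f.support, f s • τ (Finsupp.single s 1) := by
        have h1 : τ f = f := by simp [τ, hf]
        conv_lhs => rw [← h1, ← Finsupp.sum_single f]
        rw [Finsupp.sum, map_sum]
        refine Finset.sum_congr rfl fun s _ => ?_
        rw [← map_smul, Finsupp.smul_single, smul_eq_mul, mul_one]
      have h0 := hmin f hf
      conv_lhs => rw [hf1]
      rw [map_sum]
      refine Finset.sum_eq_zero fun s _ => ?_
      obtain ⟨n, hn⟩ := G.fin (f s)
      rw [hn n le_rfl, Finset.sum_smul, map_sum]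
      refine Finset.sum_eq_zero fun i _ => ?_
      rcases Nat.eq_zero_or_pos i with rfl | hi
      · rw [h0, zero_smul, map_zero]
      · refine ((freeGr G deg).p_smul_left (G.toGrGroup.p_idem i (f s)) _ l).trans ?_
        split_ifs with hil
        · have := ih _ (hτ (Finsupp.single s 1)) (l - i) (by omega)
          rw [freeGr_p, this, smul_zero]
        · rfl
  refine subsingleton_of_forall_eq 0 fun f => ?_
  ext1
  exact (freeGr G deg).toGrGroup.eq_zero _ fun d => key (d+1) f.1 f.2 d (by omega)

end Cover

section Minimal

variable {R : Type u} [Ring R] {G : GrRing R} {W0 : Type u}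
  [AddCommGroup W0] [Module R W0] (g : GrMod G W0)
  {U : Type u} [DivisionRing U] (ι : U →+* R) (π : R →+ U) (hι : ∀ u, G.p 0 (ι u) = ι u)
  (hπ : ∀ r, ι (π r) = G.p 0 r)

include hι hπ in
lemma exists_min : ∃ (S : Type u) (deg : S → ℕ) (gen : S → W0),
    (∀ s, g.p (deg s) (gen s) = gen s) ∧ Function.Surjective (Finsupp.linearCombination R gen) ∧
    (∀ f : S →₀ R, Finsupp.linearCombination R gen f = 0 → ∀ s, G.p 0 (f s) = 0) := by
  classical
  let _ : Module U W0 := Module.compHom W0 ι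
  have hsm : ∀ (u : U) (x : W0), u • x = ι u • x := fun _ _ => rfl
  let D : Set W0 := {z | ∃ i r y, 0 < i ∧ G.p i r = r ∧ z = r • y}
  let B : Submodule U W0 := Submodule.span U D
  let H : ℕ → Submodule U W0 := fun j =>
    { carrier := {x | g.p j x = x}
      add_mem' := fun {a b} ha hb => by
        have ha' : g.p j a = a := ha
        have hb' : g.p j b = b := hb
        change g.p j (a + b) = a + b
        rw [map_add, ha', hb']
      zero_mem' := map_zero _
      smul_mem' := fun u x hx => by
        have := g.smul 0 j (ι u) x (hι u) hx
        rwa [zero_add] at this }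
  have hmem : ∀ j x, x ∈ H j ↔ g.p j x = x := fun _ _ => Iff.rfl
  have hC : ∀ j, ∃ C : Submodule U W0, C ≤ H j ∧ Disjoint C B ∧ ∀ x ∈ H j, ∃ c ∈ C,
      x - c ∈ B := by
    intro j
    obtain ⟨D, hD⟩ := Submodule.exists_isCompl (B ⊓ H j)
    refine ⟨D ⊓ H j, inf_le_right, ?_, fun x hx => ?_⟩
    · rw [Submodule.disjoint_def]
      intro x hx hxB
      exact (Submodule.disjoint_def.1 hD.disjoint) x ⟨hxB, hx.2⟩ hx.1
    · have : x ∈ (B ⊓ H j) ⊔ D := by rw [hD.sup_eq_top]; trivial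
      obtain ⟨b, hb, d, hd, rfl⟩ := Submodule.mem_sup.1 this
      refine ⟨d, ⟨hd, ?_⟩, by simpa using hb.1⟩
      have := (H j).sub_mem hx hb.2
      simpa using this
  choose C hCH hCB hCx using hC
  let b := fun j => Module.Basis.ofVectorSpace U (C j)
  let S := Σ j, Module.Basis.ofVectorSpaceIndex U (C j)
  let deg : S → ℕ := fun s => s.1
  let gen : S → W0 := fun s => (b s.1 s.2 : C s.1).1
  have hgen : ∀ s, g.p (deg s) (gen s) = gen s := fun s => hCH s.1 (b s.1 s.2).2
  refine ⟨S, deg, gen, hgen, ?_, ?_⟩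
  · -- surjectivity
    let N := LinearMap.range (Finsupp.linearCombination R gen)
    have hCN : ∀ j, ∀ c ∈ C j, c ∈ N := by
      intro j c hc
      have h1 : (⟨c, hc⟩ : C j) ∈ Submodule.span U (Set.range (b j)) := by
        rw [(b j).span_eq]; trivial
      have h2 : ∀ z : C j, z ∈ Submodule.span U (Set.range (b j)) → z.1 ∈ N := by
        intro z hz
        induction hz using Submodule.span_induction with
        | mem z hz =>
          obtain ⟨i, rfl⟩ := hz
          exact ⟨Finsupp.single ⟨j, i⟩ 1, by simp [gen]⟩
        | zero => exact N.zero_mem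
        | add x y _ _ hx hy => exact N.add_mem hx hy
        | smul u x _ hx => exact N.smul_mem (ι u) hx
      exact h2 _ h1
    have hHN : ∀ j, ∀ x ∈ H j, x ∈ N := by
      intro j
      induction j using Nat.strong_induction_on with
      | _ j ih =>
        intro x hx
        obtain ⟨c, hc, hb⟩ := hCx j x hx
        have hBN : ∀ z ∈ B, g.p j z ∈ N := by
          intro z hz
          induction hz using Submodule.span_induction with
          | mem z hz =>
            obtain ⟨i, r, y, hi, hr, rfl⟩ := hz
            rw [g.p_smul_left hr]
            split_ifs with hij
            · exact N.smul_mem _ (ih (j - i) (by omega) _ (g.toGrGroup.p_idem _ _))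
            · exact N.zero_mem
          | zero => rw [map_zero]; exact N.zero_mem
          | add x y _ _ hx hy => rw [map_add]; exact N.add_mem hx hy
          | smul u x _ hx =>
            rw [hsm, g.p_smul_left (hι u), if_pos (Nat.zero_le _), Nat.sub_zero]
            exact N.smul_mem (ι u) hx
        have h3 := hBN _ hb
        rw [map_sub, (hmem j x).1 hx, (hmem j c).1 (hCH j hc)] at h3
        have := N.add_mem h3 (hCN j c hc)
        simpa using this
    intro x
    obtain ⟨n, hn⟩ := g.fin x
    have : x ∈ N := by
      rw [hn n le_rfl]
      exact N.sum_mem fun i _ => hHN i _ (g.toGrGroup.p_idem _ _)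
    exact this
  · -- minimality
    intro f hf
    have key : ∀ (j : ℕ) (f : S →₀ R), ∃ l : Module.Basis.ofVectorSpaceIndex U (C j) →₀ U,
        (∀ i, l i = π (f ⟨j, i⟩)) ∧
        g.p j (Finsupp.linearCombination R gen f) - (Finsupp.linearCombination U (b j) l).1
          ∈ B := by
      intro j f
      induction f using Finsupp.induction_linear with
      | zero => exact ⟨0, by simp, by simp⟩
      | add f1 f2 h1 h2 =>
        obtain ⟨l1, h1, h1'⟩ := h1
        obtain ⟨l2, h2, h2'⟩ := h2
        refine ⟨l1 + l2, fun i => by simp [h1, h2], ?_⟩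
        have := B.add_mem h1' h2'
        convert this using 1
        simp only [map_add, Submodule.coe_add]
        abel
      | single s r =>
        obtain ⟨j', i⟩ := s
        rw [Finsupp.linearCombination_single, g.p_smul_right (hgen ⟨j', i⟩)]
        by_cases hj : j' = j
        · subst hj
          refine ⟨Finsupp.single i (π r), fun i' => ?_, ?_⟩
          · by_cases h : i = i'
            · subst h; simp
            · rw [Finsupp.single_eq_of_ne (Ne.symm h), Finsupp.single_eq_of_ne, map_zero]
              intro h'
              apply h
              exact (eq_of_heq (Sigma.mk.inj h').2).symm
          · rw [if_pos le_rfl, Finsupp.linearCombination_single]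
            change G.p (j' - j') r • (b j' i).1 - ι (π r) • (b j' i).1 ∈ B
            rw [hπ, Nat.sub_self, sub_self]
            exact B.zero_mem
        · refine ⟨0, fun i' => ?_, ?_⟩
          · rw [Finsupp.single_eq_of_ne, map_zero]
            · rfl
            · intro h'
              apply hj
              simpa using (congrArg Sigma.fst h').symm
          · simp only [map_zero, Submodule.coe_zero, sub_zero]
            split_ifs with hle
            · refine Submodule.subset_span ⟨j - j', _, _, ?_, G.toGrGroup.p_idem _ _, rfl⟩
              change j' ≤ j at hle
              omega
            · exact B.zero_mem
    rintro ⟨j, i⟩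
    obtain ⟨l, hl, hB⟩ := key j f
    rw [hf, map_zero, zero_sub, neg_mem_iff] at hB
    have h0 := (Submodule.disjoint_def.1 (hCB j)) _ (Subtype.property _) hB
    have h1 : Finsupp.linearCombination U (b j) l = 0 := Subtype.ext h0
    have h2 : l = 0 := (linearIndependent_iff.1 (b j).linearIndependent) l h1
    rw [← hπ, ← hl, h2]
    simp

end Minimal

theorem pd_filt {R : Type u} [Ring R] {G : GrRing R}
    {U : Type u} [DivisionRing U] (ι : U →+* R) (π : R →+ U) (hι : ∀ u, G.p 0 (ι u) = ι u)
    (hπ : ∀ r, ι (π r) = G.p 0 r) (n : ℕ) :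
    ∀ (W W0 : Type u) [AddCommGroup W] [Module R W] [AddCommGroup W0] [Module R W0]
      (g : GrMod G W0) (_ : Filt g W), PD R W0 n → PD R W n := by
  induction n with
  | zero =>
    intro W W0 _ _ _ _ g F h
    rw [PD.zero_iff] at *
    exact F.subsingleton
  | succ n ih =>
    intro W W0 _ _ _ _ g F h
    obtain ⟨S, deg, gen, hgen, hsurj, hmin⟩ := exists_min g ι π hι hπ
    choose gen' hgen' using fun s => F.surj (deg s) (gen s) (hgen s)
    refine PD.ker_up _ (surj' g deg gen hgen F gen' hgen' hsurj) ?_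
    refine ih _ _ _ (kerFilt g deg gen hgen F gen' hgen' hsurj) ?_
    cases n with
    | zero =>
      rw [PD.zero_iff]
      exact ker_eq_zero deg gen hsurj hmin (PD.one_iff.1 h)
    | succ n => exact PD.ker_down _ hsurj h

end GD

namespace GD

section Tens

/-- The external tensor product of an `A`-module and a `U`-module. -/
def T (k : Type u) [Field k] (N M : Type u) [AddCommGroup N] [AddCommGroup M] [Module k N]
    [Module k M] : Type u := N ⊗[k] M

variable {k : Type u} [Field k] {N N' M : Type u} [AddCommGroup N] [AddCommGroup N']
  [AddCommGroup M] [Module k N] [Module k N'] [Module k M]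

noncomputable instance : AddCommGroup (T k N M) := inferInstanceAs (AddCommGroup (N ⊗[k] M))

variable {A U : Type u} [Ring A] [Ring U] [Algebra k A] [Algebra k U] [Module A N] [Module A N']
  [Module U M] [IsScalarTower k A N] [IsScalarTower k A N'] [IsScalarTower k U M]

noncomputable instance instTA : Module A (T k N M) := inferInstanceAs (Module A (N ⊗[k] M))

/-- The representation defining the module structure on the external tensor product. -/
noncomputable def rep : A ⊗[k] U →ₐ[k] Module.End k (N ⊗[k] M) :=
  (Module.endTensorEndAlgHom (R := k) (S := k) (A := k) (M := N) (N := M)).comp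
    (Algebra.TensorProduct.map (Algebra.lsmul k k N) (Algebra.lsmul k k M))

noncomputable instance instTR : Module (A ⊗[k] U) (T k N M) :=
  Module.compHom (N ⊗[k] M) (rep (k := k) (N := N) (M := M) (A := A) (U := U)).toRingHom

/-- Pure tensors. -/
def tm (n : N) (m : M) : T k N M := n ⊗ₜ[k] m

lemma T_smul (a : A) (u : U) (n : N) (m : M) :
    (a ⊗ₜ[k] u) • (tm n m : T k N M) = tm (a • n) (u • m) := rfl

lemma T_smulA (a : A) (n : N) (m : M) :
    a • (tm n m : T k N M) = tm (a • n) m := rfl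

lemma T_ind {p : T k N M → Prop} (x : T k N M) (h0 : p 0) (ht : ∀ n m, p (tm n m))
    (ha : ∀ x y, p x → p y → p (x + y)) : p x :=
  TensorProduct.induction_on (motive := p) x h0 ht ha

instance : IsScalarTower A (A ⊗[k] U) (T k N M) where
  smul_assoc a r x := by
    induction r using TensorProduct.induction_on with
    | zero => simp
    | add r s hr hs => rw [smul_add, add_smul, hr, hs, add_smul, smul_add]
    | tmul b u =>
      induction x using T_ind with
      | h0 => simp
      | ha x y hx hy => simp only [smul_add, hx, hy]
      | ht n m =>
        rw [TensorProduct.smul_tmul', T_smul, T_smul, T_smulA, smul_eq_mul, mul_smul]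

/-- Functoriality of the external tensor product, additive version. -/
noncomputable def Tadd (f : N →ₗ[A] N') : T k N M →+ T k N' M :=
  (LinearMap.rTensor M (f.restrictScalars k)).toAddMonoidHom

/-- Functoriality of the external tensor product. -/
noncomputable def Tmap (f : N →ₗ[A] N') : T k N M →ₗ[A ⊗[k] U] T k N' M where
  toFun := Tadd f
  map_add' := map_add _
  map_smul' r x := by
    dsimp only [RingHom.id_apply]
    induction r using TensorProduct.induction_on with
    | zero => rw [zero_smul, zero_smul, map_zero]
    | add r s hr hs => rw [add_smul, add_smul, ← hr, ← hs, map_add]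
    | tmul b u =>
      induction x using T_ind with
      | h0 => rw [smul_zero, map_zero, smul_zero]
      | ha x y hx hy => rw [smul_add, map_add, map_add, smul_add, hx, hy]
      | ht n m =>
        change tm (f (b • n)) (u • m) = tm (b • f n) (u • m)
        rw [map_smul]

lemma Tmap_tm (f : N →ₗ[A] N') (n : N) (m : M) :
    Tmap (U := U) f (tm n m : T k N M) = tm (f n) m := rfl

lemma Tmap_exact {Nq : Type u} [AddCommGroup Nq] [Module k Nq] [Module A Nq]
    [IsScalarTower k A Nq] (f : N →ₗ[A] N') (g : N' →ₗ[A] Nq) (h : Function.Exact f g)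
    (hg : Function.Surjective g) : Function.Exact (Tmap (k := k) (M := M) (U := U) f)
      (Tmap (k := k) (M := M) (U := U) g) := by
  have h1 : Function.Exact (f.restrictScalars k) (g.restrictScalars k) := h
  have h2 : Function.Surjective (g.restrictScalars k) := hg
  exact rTensor_exact M h1 h2

lemma T_proj {J : Type u} [Module.Projective A N] :
    Module.Projective (A ⊗[k] U) (T k N (J →₀ U)) := by
  classical
  obtain ⟨s, hs⟩ := (Module.projective_def' (R := A) (P := N)).1 inferInstance
  have hfree : Module.Projective (A ⊗[k] U) (T k (N →₀ A) (J →₀ U)) := by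
    let e : (N →₀ A) ⊗[k] (J →₀ U) ≃ₗ[k] (N × J →₀ A ⊗[k] U) :=
      finsuppTensorFinsupp k k A U N J
    have he : ∀ (r : A ⊗[k] U) (x : T k (N →₀ A) (J →₀ U)), e (r • x) = r • e x := by
      intro r x
      induction r using TensorProduct.induction_on with
      | zero => rw [zero_smul, zero_smul]; exact map_zero _
      | add r s hr hs => rw [add_smul, add_smul, ← hr, ← hs]; exact map_add _ _ _
      | tmul b u =>
        induction x using T_ind with
        | h0 => rw [smul_zero]; erw [map_zero]; rw [smul_zero]
        | ha x y hx hy =>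
          rw [smul_add]; erw [map_add, map_add]; rw [hx, hy]; exact (smul_add _ _ _).symm
        | ht n m =>
          rw [T_smul]
          change e ((b • n) ⊗ₜ (u • m)) = _ • e (n ⊗ₜ m)
          ext ⟨i, j⟩
          simp only [e, finsuppTensorFinsupp_apply, Finsupp.smul_apply, smul_eq_mul,
            Algebra.TensorProduct.tmul_mul_tmul]
    let e' : T k (N →₀ A) (J →₀ U) ≃ₗ[A ⊗[k] U] (N × J →₀ A ⊗[k] U) :=
      { toFun := e
        invFun := e.symm
        left_inv := e.left_inv
        right_inv := e.right_inv
        map_add' := fun x y => map_add e x y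
        map_smul' := he }
    exact Module.Projective.of_equiv e'.symm
  refine Module.Projective.of_split (Tmap (U := U) s)
    (Tmap (U := U) (Finsupp.linearCombination A id)) ?_
  ext x
  induction x using T_ind with
  | h0 => simp
  | ha x y hx hy => rw [map_add, hx, hy, map_add]
  | ht n m =>
    rw [LinearMap.comp_apply, Tmap_tm, Tmap_tm]
    have := LinearMap.congr_fun hs n
    simp only [LinearMap.comp_apply] at this
    rw [this]
    rfl

lemma PD_T {J : Type u} (n : ℕ) : ∀ (N : Type u) [AddCommGroup N] [Module k N] [Module A N]
    [IsScalarTower k A N], PD A N n → PD (A ⊗[k] U) (T k N (J →₀ U)) n := by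
  induction n with
  | zero =>
    intro N _ _ _ _ h
    rw [PD.zero_iff] at *
    refine subsingleton_of_forall_eq 0 fun x => ?_
    induction x using T_ind with
    | h0 => rfl
    | ha x y hx hy => rw [hx, hy, add_zero]
    | ht n m =>
      rw [Subsingleton.elim n 0]
      exact TensorProduct.zero_tmul _ _
  | succ n ih =>
    intro N _ _ _ _ h
    cases n with
    | zero =>
      rw [zero_add, PD.one_iff] at *
      exact T_proj
    | succ n =>
      let φ : (N →₀ A) →ₗ[A] N := Finsupp.linearCombination A id
      have hφ : Function.Surjective φ := Finsupp.linearCombination_id_surjective A N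
      have h1 := ih _ (PD.ker_down φ hφ h)
      have := T_proj (k := k) (U := U) (A := A) (N := N →₀ A) (J := J)
      refine PD.up (Tmap (LinearMap.ker φ).subtype) (Tmap φ) ?_ ?_ ?_ h1
      · exact Module.Flat.rTensor_preserves_injective_linearMap (M := J →₀ U)
          ((LinearMap.ker φ).subtype.restrictScalars k) (Submodule.subtype_injective _)
      · exact LinearMap.rTensor_surjective (J →₀ U) (g := φ.restrictScalars k) hφ
      · exact Tmap_exact _ _ (LinearMap.exact_subtype_ker_map φ) hφ

lemma res_proj (X : Type u) [AddCommGroup X] [Module A X] [Module (A ⊗[k] U) X]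
    [IsScalarTower A (A ⊗[k] U) X] [Module.Projective (A ⊗[k] U) X] : Module.Projective A X := by
  classical
  have hR : Module.Projective A (A ⊗[k] U) :=
    Module.Projective.of_basis (Algebra.TensorProduct.basis A (Module.Basis.ofVectorSpace k U))
  obtain ⟨s, hs⟩ := (Module.projective_def' (R := A ⊗[k] U) (P := X)).1 inferInstance
  have hF : Module.Projective A (X →₀ A ⊗[k] U) :=
    Module.Projective.of_equiv (finsuppLEquivDirectSum A (A ⊗[k] U) X).symm
  refine Module.Projective.of_split (s.restrictScalars A)
    ((Finsupp.linearCombination (A ⊗[k] U) id).restrictScalars A) ?_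
  ext x
  exact LinearMap.congr_fun hs x

lemma PD_res (n : ℕ) : ∀ (X : Type u) [AddCommGroup X] [Module A X] [Module (A ⊗[k] U) X]
    [IsScalarTower A (A ⊗[k] U) X], PD (A ⊗[k] U) X n → PD A X n := by
  induction n with
  | zero =>
    intro X _ _ _ _ h
    rw [PD.zero_iff] at *
    exact h
  | succ n ih =>
    intro X _ _ _ _ h
    cases n with
    | zero =>
      rw [zero_add, PD.one_iff] at *
      exact res_proj (k := k) (U := U) X
    | succ n =>
      let φ : (X →₀ A ⊗[k] U) →ₗ[A ⊗[k] U] X := Finsupp.linearCombination (A ⊗[k] U) id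
      have hφ : Function.Surjective φ := Finsupp.linearCombination_id_surjective _ X
      have h1 := ih _ (PD.ker_down φ hφ h)
      have := res_proj (k := k) (U := U) (A := A) (X →₀ A ⊗[k] U)
      exact PD.up ((LinearMap.ker φ).subtype.restrictScalars A) (φ.restrictScalars A)
        (Submodule.subtype_injective _) hφ (LinearMap.exact_subtype_ker_map φ) h1

lemma PD_of_T (n : ℕ) (m0 : M) (hm : m0 ≠ 0) (h : PD (A ⊗[k] U) (T k N M) n) : PD A N n := by
  obtain ⟨l, hl⟩ := Module.Projective.exists_dual_eq_one k hm
  have h1 := PD_res (k := k) (U := U) n (T k N M) h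
  let ρ : T k N M →+ N :=
    ((TensorProduct.rid k N).toLinearMap ∘ₗ (LinearMap.lTensor N l)).toAddMonoidHom
  refine PD.retract (Y := T k N M)
    { toFun := fun n => tm n m0
      map_add' := fun a b => TensorProduct.add_tmul _ _ _
      map_smul' := fun a n => rfl }
    { toFun := ρ
      map_add' := map_add ρ
      map_smul' := fun a x => by
        dsimp only [RingHom.id_apply]
        induction x using T_ind with
        | h0 => rw [smul_zero, map_zero, smul_zero]
        | ha x y hx hy => rw [smul_add, map_add, map_add, smul_add, hx, hy]
        | ht n m =>
          change l m • (a • n) = a • (l m • n)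
          rw [smul_comm] } ?_ h1
  intro x
  change l m0 • x = x
  rw [hl, one_smul]

end Tens
end GD

namespace GD

section Triv
variable {R : Type u} [Ring R] {G : GrRing R} {W W0 : Type u} [AddCommGroup W] [Module R W]
  [AddCommGroup W0] [Module R W0]

/-- The grading concentrated in degree zero. -/
noncomputable def trivGr (h0 : ∀ i r, 0 < i → G.p i r = r → ∀ x : W0, r • x = 0) :
    GrMod G W0 where
  p i := if i = 0 then AddMonoidHom.id W0 else 0
  pp i j x := by
    by_cases hi : i = 0
    · by_cases hj : j = 0
      · simp [hi, hj]
      · simp [hi, hj]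
    · by_cases hj : j = 0
      · simp [hi, hj]
      · simp [hi, hj]
  fin x := by
    refine ⟨1, fun m hm => ?_⟩
    rw [Finset.sum_eq_single 0]
    · simp
    · intro b _ hb
      simp [hb]
    · intro h
      exfalso
      apply h
      rw [Finset.mem_range]
      omega
  smul i j r x hr hx := by
    by_cases hj : j = 0
    · by_cases hi : i = 0
      · simp [hi, hj]
      · rw [h0 i r (by omega) hr x, map_zero]
    · have : x = 0 := by
        rw [← hx]
        simp [hj]
      rw [this, smul_zero, map_zero]

lemma trivGr_p (h0 : ∀ i r, 0 < i → G.p i r = r → ∀ x : W0, r • x = 0) (i : ℕ) :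
    (trivGr h0).p i = if i = 0 then AddMonoidHom.id W0 else 0 := rfl

/-- The trivial filtration. -/
noncomputable def trivFilt (h0 : ∀ i r, 0 < i → G.p i r = r → ∀ x : W0, r • x = 0)
    (e : W ≃+ W0) (he : ∀ r w, G.p 0 r = r → e (r • w) = r • e w) :
    Filt (trivGr h0) W where
  Sym j :=
    { carrier := {z | z.2 = if j = 0 then e z.1 else 0}
      zero_mem' := by simp
      add_mem' := by
        rintro ⟨a, b⟩ ⟨c, d⟩ h1 h2
        simp only [Set.mem_setOf_eq, Prod.mk_add_mk] at *
        rw [h1, h2]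
        split_ifs <;> simp
      neg_mem' := by
        rintro ⟨a, b⟩ h1
        simp only [Set.mem_setOf_eq, Prod.neg_mk] at *
        rw [h1]
        split_ifs <;> simp }
  deg j w x h := by
    change x = if j = 0 then e w else 0 at h
    rw [trivGr_p]
    by_cases hj : j = 0
    · simp [hj]
    · simp only [if_neg hj] at *
      simp [h]
  surj j x h := by
    rw [trivGr_p] at h
    refine ⟨e.symm x, ?_⟩
    change x = if j = 0 then e (e.symm x) else 0
    by_cases hj : j = 0
    · simp [hj]
    · simp only [if_neg hj] at *
      exact h.symm
  zero w h := by
    change 0 = if 0 = 0 then e w else 0 at h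
    rw [if_pos rfl] at h
    exact e.map_eq_zero_iff.1 h.symm
  pred j w _ := ⟨if j = 0 then e w else 0,
    show (if j = 0 then e w else 0) = if j = 0 then e w else 0 from rfl⟩
  succ j w y _ := by
    change (0 : W0) = if j + 1 = 0 then e w else 0
    rw [if_neg (by omega)]
  smul i j r w x hr h := by
    change x = if j = 0 then e w else 0 at h
    change r • x = if i + j = 0 then e (r • w) else 0
    by_cases hi : i = 0
    · subst hi
      rw [h, zero_add]
      split_ifs
      · exact (he r w hr).symm
      · exact smul_zero _
    · rw [if_neg (by omega)]
      exact h0 i r (by omega) hr x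
  exh w := ⟨0, e w, show e w = if 0 = 0 then e w else 0 from (if_pos rfl).symm⟩
  uniq j x h := by
    change x = if j = 0 then e 0 else 0 at h
    rw [h]
    split_ifs <;> simp

end Triv

section Main
variable {k : Type u} [Field k] {A : Type u} [Ring A] [Algebra k A]
    (𝒜 : ℕ → Submodule k A) [GradedAlgebra 𝒜] (U : Type u) [DivisionRing U] [Algebra k U]

/-- The projections on the tensor product. -/
noncomputable def P (i : ℕ) : A ⊗[k] U →+ A ⊗[k] U :=
  (LinearMap.rTensor U (GradedAlgebra.proj 𝒜 i)).toAddMonoidHom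

lemma P_tmul (i : ℕ) (a : A) (u : U) :
    P 𝒜 U i (a ⊗ₜ[k] u) = (GradedAlgebra.proj 𝒜 i a) ⊗ₜ[k] u := rfl

lemma proj_proj (i j : ℕ) (a : A) : GradedAlgebra.proj 𝒜 i (GradedAlgebra.proj 𝒜 j a) =
    if i = j then GradedAlgebra.proj 𝒜 j a else 0 := by
  rw [GradedAlgebra.proj_apply, GradedAlgebra.proj_apply]
  split_ifs with h
  · subst h
    exact DirectSum.decompose_of_mem_same 𝒜 (SetLike.coe_mem _)
  · exact DirectSum.decompose_of_mem_ne 𝒜 (SetLike.coe_mem _) (Ne.symm h)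

lemma proj_fin (a : A) :
    ∃ n, ∀ m, n ≤ m → a = ∑ i ∈ Finset.range m, GradedAlgebra.proj 𝒜 i a := by
  classical
  refine ⟨(DirectSum.decompose 𝒜 a).support.sup id + 1, fun m hm => ?_⟩
  conv_lhs => rw [← DirectSum.sum_support_decompose 𝒜 a]
  refine Finset.sum_subset ?_ ?_
  · intro i hi
    rw [Finset.mem_range]
    have : i ≤ _ := Finset.le_sup (f := id) hi
    omega
  · intro i _ hi
    rw [DFinsupp.notMem_support_iff] at hi
    rw [hi]
    rfl

/-- The grading of the tensor product. -/
noncomputable def GR : GrRing (A ⊗[k] U) where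
  p := P 𝒜 U
  pp i j x := by
    induction x using TensorProduct.induction_on with
    | zero => simp
    | add x y hx hy =>
      simp only [map_add, hx, hy]
      split_ifs <;> simp
    | tmul a u =>
      rw [P_tmul, P_tmul, proj_proj]
      split_ifs
      · rfl
      · exact TensorProduct.zero_tmul _ _
  fin x := by
    induction x using TensorProduct.induction_on with
    | zero => exact ⟨0, fun m _ => by simp⟩
    | add x y hx hy =>
      obtain ⟨n1, h1⟩ := hx
      obtain ⟨n2, h2⟩ := hy
      refine ⟨max n1 n2, fun m hm => ?_⟩
      simp only [map_add, Finset.sum_add_distrib]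
      rw [← h1 m (le_trans (le_max_left _ _) hm), ← h2 m (le_trans (le_max_right _ _) hm)]
    | tmul a u =>
      obtain ⟨n, hn⟩ := proj_fin 𝒜 a
      refine ⟨n, fun m hm => ?_⟩
      simp only [P_tmul]
      rw [← TensorProduct.sum_tmul, ← hn m hm]
  mul i j r s hr hs := by
    rw [← hr, ← hs]
    clear hr hs
    induction r using TensorProduct.induction_on with
    | zero => simp
    | add x y hx hy => simp only [map_add, add_mul, hx, hy]
    | tmul a u =>
      induction s using TensorProduct.induction_on with
      | zero => simp
      | add x y hx hy => simp only [map_add, mul_add, hx, hy]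
      | tmul b v =>
        rw [P_tmul, P_tmul, Algebra.TensorProduct.tmul_mul_tmul, P_tmul]
        congr 1
        rw [GradedAlgebra.proj_apply]
        refine DirectSum.decompose_of_mem_same 𝒜 (SetLike.mul_mem_graded ?_ ?_)
        · rw [GradedAlgebra.proj_apply]; exact SetLike.coe_mem _
        · rw [GradedAlgebra.proj_apply]; exact SetLike.coe_mem _


lemma eps_pos (ε : A →ₐ[k] k)
    (hker : RingHom.ker ε.toRingHom = Ideal.span {x : A | ∃ i, 0 < i ∧ x ∈ 𝒜 i})
    (i : ℕ) (hi : 0 < i) (a : A) (ha : a ∈ 𝒜 i) : ε a = 0 := by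
  have : a ∈ RingHom.ker ε.toRingHom := by
    rw [hker]
    exact Ideal.subset_span ⟨i, hi, ha⟩
  exact this

lemma proj_mem (i : ℕ) (a : A) : GradedAlgebra.proj 𝒜 i a ∈ 𝒜 i := by
  rw [GradedAlgebra.proj_apply]; exact SetLike.coe_mem _

lemma eps_proj (ε : A →ₐ[k] k)
    (hker : RingHom.ker ε.toRingHom = Ideal.span {x : A | ∃ i, 0 < i ∧ x ∈ 𝒜 i})
    (a : A) : ε (GradedAlgebra.proj 𝒜 0 a) = ε a := by
  obtain ⟨n, hn⟩ := proj_fin 𝒜 a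
  conv_rhs => rw [hn (n + 1) (by omega), map_sum]
  rw [Finset.sum_eq_single 0]
  · intro b _ hb
    exact eps_pos 𝒜 ε hker b (by omega) _ (proj_mem 𝒜 b a)
  · intro h
    exfalso
    apply h
    rw [Finset.mem_range]
    omega

lemma proj_zero
    (hconn : 𝒜 0 = (1 : Submodule k A)) (ε : A →ₐ[k] k)
    (hker : RingHom.ker ε.toRingHom = Ideal.span {x : A | ∃ i, 0 < i ∧ x ∈ 𝒜 i})
    (a : A) : GradedAlgebra.proj 𝒜 0 a = algebraMap k A (ε a) := by
  have h := proj_mem 𝒜 0 a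
  rw [hconn, Submodule.mem_one] at h
  obtain ⟨c, hc⟩ := h
  rw [← eps_proj 𝒜 ε hker a, ← hc, AlgHom.commutes]
  rfl

/-- The augmentation of the tensor product. -/
noncomputable def aug (ε : A →ₐ[k] k) : A ⊗[k] U →+ U :=
  ((TensorProduct.lid k U).toLinearMap ∘ₗ LinearMap.rTensor U ε.toLinearMap).toAddMonoidHom

lemma aug_tmul (ε : A →ₐ[k] k) (a : A) (u : U) : aug U ε (a ⊗ₜ[k] u) = ε a • u := rfl

/-- The inclusion of `U`. -/
noncomputable def incl : U →+* A ⊗[k] U :=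
  (Algebra.TensorProduct.includeRight : U →ₐ[k] A ⊗[k] U).toRingHom

lemma incl_apply (u : U) : incl (k := k) (A := A) U u = 1 ⊗ₜ[k] u := rfl

lemma hincl (u : U) : (GR 𝒜 U).p 0 (incl U u) = incl U u := by
  change P 𝒜 U 0 (1 ⊗ₜ[k] u) = 1 ⊗ₜ[k] u
  rw [P_tmul, GradedAlgebra.proj_apply,
    DirectSum.decompose_of_mem_same 𝒜 (SetLike.one_mem_graded 𝒜)]

lemma haug
    (hconn : 𝒜 0 = (1 : Submodule k A)) (ε : A →ₐ[k] k)
    (hker : RingHom.ker ε.toRingHom = Ideal.span {x : A | ∃ i, 0 < i ∧ x ∈ 𝒜 i})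
    (r : A ⊗[k] U) : incl U (aug U ε r) = (GR 𝒜 U).p 0 r := by
  induction r using TensorProduct.induction_on with
  | zero => simp
  | add x y hx hy => simp only [map_add, hx, hy]
  | tmul a u =>
    rw [aug_tmul, incl_apply]
    change _ = P 𝒜 U 0 (a ⊗ₜ[k] u)
    rw [P_tmul, proj_zero 𝒜 hconn ε hker, TensorProduct.tmul_smul, TensorProduct.smul_tmul',
      Algebra.algebraMap_eq_smul_one]

lemma upper
    (hconn : 𝒜 0 = (1 : Submodule k A)) (ε : A →ₐ[k] k)
    (hker : RingHom.ker ε.toRingHom = Ideal.span {x : A | ∃ i, 0 < i ∧ x ∈ 𝒜 i})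
    [Module A k] (hsmul : ∀ (a : A) (c : k), a • c = ε a * c)
    (n : ℕ) (h : PD A k n) (M : Type u) [AddCommGroup M] [Module (A ⊗[k] U) M] :
    PD (A ⊗[k] U) M n := by
  have hst : IsScalarTower k A k := ⟨fun c a x => by
    rw [hsmul, hsmul, map_smul, smul_eq_mul, smul_eq_mul, mul_assoc]⟩
  letI : Module U M := Module.compHom M (incl (k := k) (A := A) U)
  have hUM : ∀ (u : U) (m : M), u • m = incl (k := k) (A := A) U u • m := fun u m => rfl
  let b := Module.Basis.ofVectorSpace U M
  let J : Type u := Module.Basis.ofVectorSpaceIndex U M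
  have h1 : PD (A ⊗[k] U) (T k k (J →₀ U)) n := PD_T n k h
  let e2 : (J →₀ U) ≃+ T k k (J →₀ U) := (TensorProduct.lid k (J →₀ U)).symm.toAddEquiv
  have he2 : ∀ x, e2 x = tm 1 x := fun x => rfl
  have h0 : ∀ i r, 0 < i → (GR 𝒜 U).p i r = r → ∀ x : T k k (J →₀ U), r • x = 0 := by
    intro i r hi hr x
    rw [← hr]
    clear hr
    change P 𝒜 U i r • x = 0
    induction r using TensorProduct.induction_on with
    | zero => rw [map_zero, zero_smul]
    | add r s hr hs => rw [map_add, add_smul, hr, hs, add_zero]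
    | tmul a u =>
      rw [P_tmul]
      induction x using T_ind with
      | h0 => rw [smul_zero]
      | ha x y hx hy => rw [smul_add, hx, hy, add_zero]
      | ht c m =>
        rw [T_smul, hsmul, eps_pos 𝒜 ε hker i hi _ (proj_mem 𝒜 i a), zero_mul]
        exact TensorProduct.zero_tmul _ _
  refine pd_filt (incl U) (aug U ε) (hincl 𝒜 U) (haug 𝒜 U hconn ε hker) n M _ (trivGr h0)
    (trivFilt h0 (b.repr.toAddEquiv.trans e2) ?_) h1
  intro r w hr
  rw [← hr, ← haug 𝒜 U hconn ε hker r, ← hUM]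
  change e2 (b.repr (_ • w)) = _ • e2 (b.repr w)
  rw [map_smul, he2, he2, incl_apply, T_smul, one_smul]

lemma lower (n : ℕ) (h : ∀ (M : Type u) [AddCommGroup M] [Module (A ⊗[k] U) M],
    PD (A ⊗[k] U) M n) (N : Type u) [AddCommGroup N] [Module A N] : PD A N n := by
  letI : Module k N := Module.compHom N (algebraMap k A)
  have : IsScalarTower k A N := ⟨fun c a x => by
    rw [Algebra.smul_def, mul_smul]; rfl⟩
  exact PD_of_T (k := k) (U := U) (M := U) n 1 one_ne_zero (h _)

end Main

lemma le_of_nat {a b : ℕ∞} (h : ∀ n : ℕ, b ≤ n → a ≤ n) : a ≤ b := by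
  induction b using ENat.recTopCoe with
  | top => exact le_top
  | coe n => exact h n le_rfl

end GD

/-- Lemma 5.1: for a connected graded `k`-algebra `A` and a division `k`-algebra
`U`, the (ungraded, left) global dimension of `A ⊗[k] U` equals the projective dimension of the
trivial left `A`-module `k`; in particular `gldim (A ⊗[k] U) = gldim A`. -/
theorem stmt_13 (k : Type u) [Field k] (A : Type u) [Ring A] [Algebra k A]
    (𝒜 : ℕ → Submodule k A) [GradedAlgebra 𝒜]
    (hconn : 𝒜 0 = (1 : Submodule k A))
    (ε : A →ₐ[k] k)
    (hker : RingHom.ker ε.toRingHom = Ideal.span {x : A | ∃ i, 0 < i ∧ x ∈ 𝒜 i})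
    [Module A k] (hsmul : ∀ (a : A) (c : k), a • c = ε a * c)
    (U : Type u) [DivisionRing U] [Algebra k U] :
    Ring.globalDim (A ⊗[k] U) = ModuleCat.projDim (ModuleCat.of A k) ∧
      Ring.globalDim (A ⊗[k] U) = Ring.globalDim A := by
  have h1 : Ring.globalDim (A ⊗[k] U) ≤ ModuleCat.projDim (ModuleCat.of A k) :=
    GD.le_of_nat fun n hn => (GD.globalDim_le_iff n).2 fun M =>
      GD.upper 𝒜 U hconn ε hker hsmul (n + 1) ((GD.projDim_le_iff _ n).1 hn) M
  have h2 : Ring.globalDim A ≤ Ring.globalDim (A ⊗[k] U) :=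
    GD.le_of_nat fun n hn => (GD.globalDim_le_iff n).2 fun N =>
      GD.lower (k := k) U (n + 1)
        (fun M _ _ => (GD.globalDim_le_iff n).1 hn (ModuleCat.of (A ⊗[k] U) M)) N
  have h3 : ModuleCat.projDim (ModuleCat.of A k) ≤ Ring.globalDim A :=
    le_iSup (fun M : ModuleCat.{u} A => M.projDim) (ModuleCat.of A k)
  exact ⟨le_antisymm h1 (h3.trans h2), le_antisymm (h1.trans h3) h2⟩
end

section
/- Let J be the kernel of the multiplication map μ: F ⊗_k F → F. Then there exists an infinite sequence (e_i)_{i=1}^∞ of nonzero pairwise orthogonal idempotents in F ⊗_k F such that J is the internal direct sum ⊕_{i=1}^∞ e_i·(F ⊗_k F) of the ideals e_i·(F ⊗_k F). -/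
open CategoryTheory Limits TensorProduct

universe u

namespace Stmt14

/-- A separating idempotent forces finiteness. -/
lemma finite_of_elem {k F : Type u} [Field k] [Field F] [Algebra k F] (t : F ⊗[k] F) (ht0 : t ≠ 0)
    (ht : ∀ a : F, ((1 : F) ⊗ₜ[k] a) * t = (a ⊗ₜ[k] (1 : F)) * t) : Module.Finite k F := by
  classical
  let b := Module.Basis.ofVectorSpace k F
  obtain ⟨i, hi⟩ : ∃ i, TensorProduct.equivFinsuppOfBasisLeft (N := F) b t i ≠ 0 := by
    by_contra! h
    apply ht0
    apply (TensorProduct.equivFinsuppOfBasisLeft (N := F) b).injective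
    ext i
    simp [h i]
  let L : F ⊗[k] F →ₗ[k] F :=
    (Finsupp.lapply i) ∘ₗ (TensorProduct.equivFinsuppOfBasisLeft (N := F) b).toLinearMap
  have hL : ∀ m n : F, L (m ⊗ₜ n) = b.repr m i • n := by
    intro m n; simp [L]
  have hLt : L t ≠ 0 := hi
  have h1 : ∀ (a : F) z, L (((1 : F) ⊗ₜ[k] a) * z) = a * L z := by
    intro a z
    induction z with
    | zero => simp
    | tmul x y => simp [hL]
    | add x y hx hy => rw [mul_add, map_add, map_add, hx, hy, mul_add]
  obtain ⟨S, hS⟩ := TensorProduct.exists_finset t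
  let V : Submodule k F := Submodule.span k (S.image Prod.snd : Finset F)
  have hV : ∀ a : F, L ((a ⊗ₜ[k] (1 : F)) * t) ∈ V := by
    intro a
    rw [hS, Finset.mul_sum, map_sum]
    refine Submodule.sum_mem _ fun p hp => ?_
    rw [Algebra.TensorProduct.tmul_mul_tmul, one_mul, hL]
    exact Submodule.smul_mem _ _ (Submodule.subset_span (Finset.mem_coe.2
      (Finset.mem_image_of_mem _ hp)))
  have htop : V = ⊤ := by
    rw [eq_top_iff]
    intro x _
    have := hV (x / L t)
    rwa [← ht, h1, div_mul_cancel₀ _ hLt] at this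
  exact ⟨⟨_, htop⟩⟩

lemma elem_idem {k S : Type u} [Field k] [CommRing S] [Algebra k S] (t : S ⊗[k] S)
    (ht : ∀ s : S, ((1 : S) ⊗ₜ[k] s - s ⊗ₜ[k] (1 : S)) * t = 0)
    (ht1 : Algebra.TensorProduct.lmul' (S := S) k t = 1) : t * (1 - t) = 0 := by
  have h1 : 1 - t ∈ KaehlerDifferential.ideal k S := by
    simp only [KaehlerDifferential.ideal, RingHom.mem_ker, map_sub, map_one]
    exact sub_eq_zero.2 ht1.symm
  rw [← KaehlerDifferential.span_range_eq_ideal] at h1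
  have : Ideal.span (Set.range fun s : S => (1 : S) ⊗ₜ[k] s - s ⊗ₜ[k] (1 : S)) ≤
      (Submodule.span (S ⊗[k] S) {t}).annihilator := by
    rw [Ideal.span_le]
    rintro _ ⟨s, rfl⟩
    exact (Submodule.mem_annihilator_span_singleton _ _).2 (ht s)
  have := (Submodule.mem_annihilator_span_singleton _ _).1 (this h1)
  rw [mul_comm]; exact this

lemma mul_idem {R : Type u} [CommRing R] (t : R) (h : t * (1 - t) = 0) :
    (1 - t) * (1 - t) = 1 - t := by linear_combination -h

lemma exists_idem (k : Type u) {F : Type u} [Field k] [Field F] [Algebra k F]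
    [Algebra.IsSeparable k F] (a : F) : ∃ f : F ⊗[k] F, f * f = f ∧
      Algebra.TensorProduct.lmul' (S := F) k f = 0 ∧
      f * ((1 : F) ⊗ₜ[k] a - a ⊗ₜ[k] (1 : F)) = (1 : F) ⊗ₜ[k] a - a ⊗ₜ[k] (1 : F) := by
  let S := IntermediateField.adjoin k {a}
  have hfin : FiniteDimensional k S :=
    IntermediateField.adjoin.finiteDimensional (Algebra.IsIntegral.isIntegral a)
  have hsep : Algebra.IsSeparable k S := inferInstance
  have : Algebra.FormallyUnramified k S := Algebra.FormallyUnramified.of_isSeparable k S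
  obtain ⟨t, ht, ht1⟩ :=
    (Algebra.FormallyUnramified.iff_exists_tensorProduct (R := k) (S := S)).1 this
  have htt : t * (1 - t) = 0 := elem_idem t ht ht1
  let φ : S ⊗[k] S →ₐ[k] F ⊗[k] F := Algebra.TensorProduct.map S.val S.val
  have hμ : ∀ z, Algebra.TensorProduct.lmul' (S := F) k (φ z) =
      S.val (Algebra.TensorProduct.lmul' (S := S) k z) := by
    intro z
    induction z with
    | zero => simp
    | tmul x y => simp [φ]
    | add x y hx hy => simp only [map_add, hx, hy]
  have haS : a ∈ S := IntermediateField.mem_adjoin_simple_self k a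
  refine ⟨φ (1 - t), ?_, ?_, ?_⟩
  · rw [← map_mul]; rw [mul_idem t htt]
  · rw [hμ, map_sub, ht1]; simp
  · have h := congrArg φ (ht ⟨a, haS⟩)
    have h2 : φ ((1 : S) ⊗ₜ[k] ⟨a, haS⟩ - (⟨a, haS⟩ : S) ⊗ₜ[k] (1 : S)) =
        (1 : F) ⊗ₜ[k] a - a ⊗ₜ[k] (1 : F) := by
      simp [φ]
    rw [map_mul, h2, map_zero] at h
    have h3 : φ 1 = 1 := φ.toRingHom.map_one
    rw [map_sub, h3]
    linear_combination -h

end Stmt14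

/-- Lemma 7.3(a): let `F` be a separable algebraic field extension of `k` of
countably infinite dimension, and let `J` be the kernel of the multiplication map
`μ : F ⊗[k] F → F`.  Then there is an infinite sequence of nonzero pairwise orthogonal
idempotents `e i` in `F ⊗[k] F` such that `J` is the internal direct sum of the ideals
`e i · (F ⊗[k] F)`. -/
theorem stmt_14 (k F : Type u) [Field k] [Field F] [Algebra k F] [Algebra.IsSeparable k F]
    (hdim : Module.rank k F = Cardinal.aleph0) :
    ∃ e : ℕ → F ⊗[k] F,
      (∀ i, e i ≠ 0) ∧
      (∀ i, IsIdempotentElem (e i)) ∧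
      (∀ i j, i ≠ j → e i * e j = 0) ∧
      iSupIndep (fun i : ℕ => Ideal.span {e i}) ∧
      (⨆ i : ℕ, Ideal.span {e i}) =
        RingHom.ker (Algebra.TensorProduct.lmul' (S := F) k).toRingHom := by
  classical
  let X : F → F ⊗[k] F := fun a => (1 : F) ⊗ₜ[k] a - a ⊗ₜ[k] (1 : F)
  set J := RingHom.ker (Algebra.TensorProduct.lmul' (S := F) k).toRingHom with hJ
  have hJX : J = Ideal.span (Set.range X) := (KaehlerDifferential.span_range_eq_ideal k F).symm
  -- a basis indexed by the natural numbers
  obtain ⟨b⟩ : Nonempty (Module.Basis ℕ k F) := by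
    let b0 := Module.Basis.ofVectorSpace k F
    have h1 : Cardinal.mk (Module.Basis.ofVectorSpaceIndex k F) = Cardinal.aleph0 := by
      rw [b0.mk_eq_rank'', hdim]
    obtain ⟨hd⟩ := Cardinal.denumerable_iff.2 h1
    exact ⟨b0.reindex (Denumerable.eqv _)⟩
  choose f hff hfμ hfX using fun n => Stmt14.exists_idem k (b n)
  let P : ℕ → F ⊗[k] F := fun n => ∏ i ∈ Finset.range n, (1 - f i)
  let h : ℕ → F ⊗[k] F := fun n => f n * P n
  have hPs : ∀ n, P (n + 1) = P n * (1 - f n) := fun n => Finset.prod_range_succ _ _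
  have hPidem : ∀ n, P n * P n = P n := by
    intro n
    rw [← Finset.prod_mul_distrib]
    exact Finset.prod_congr rfl fun i _ => by linear_combination hff i
  have hhP : ∀ n, h n = P n - P (n + 1) := by
    intro n; rw [hPs]; simp only [h]; ring
  have hhidem : ∀ n, h n * h n = h n := by
    intro n
    simp only [h]
    linear_combination (P n * P n) * hff n + f n * hPidem n
  have hfP : ∀ i n, i < n → f i * P n = 0 := by
    intro i n hin
    have : (1 - f i) ∣ P n := Finset.dvd_prod_of_mem _ (Finset.mem_range.2 hin)
    obtain ⟨c, hc⟩ := this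
    rw [hc]; linear_combination (-c) * hff i
  have hlt : ∀ i j, i < j → h i * h j = 0 := by
    intro i j hij
    simp only [h]
    linear_combination (P i * f j) * hfP i j hij
  have hort : ∀ i j, i ≠ j → h i * h j = 0 := by
    intro i j hij
    rcases lt_or_gt_of_ne hij with hl | hl
    · exact hlt i j hl
    · rw [mul_comm]; exact hlt j i hl
  have hsum : ∀ n, ∑ i ∈ Finset.range n, h i = 1 - P n := by
    intro n
    rw [Finset.sum_congr rfl fun i _ => hhP i, Finset.sum_range_sub']
    simp [P]
  have hhJ : ∀ n, h n ∈ J := by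
    intro n
    apply Ideal.mul_mem_right
    exact hfμ n
  have hXb : ∀ I : Ideal (F ⊗[k] F), (∀ n, X (b n) ∈ I) → J ≤ I := by
    intro I hI
    rw [hJX, Ideal.span_le]
    rintro _ ⟨a, rfl⟩
    let XL : F →ₗ[k] F ⊗[k] F :=
      TensorProduct.mk k F F 1 - (TensorProduct.mk k F F).flip 1
    have : (⊤ : Submodule k F) ≤ (I.restrictScalars k).comap XL := by
      rw [← b.span_eq, Submodule.span_le]
      rintro _ ⟨n, rfl⟩
      exact hI n
    exact this (Submodule.mem_top (x := a))
  have hXn : ∀ n, X (b n) = X (b n) * ∑ i ∈ Finset.range (n + 1), h i := by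
    intro n
    have h1 := hfP n (n + 1) (Nat.lt_succ_self n)
    have h2 : f n * X (b n) = X (b n) := hfX n
    rw [hsum]
    linear_combination (-P (n + 1)) * h2 + X (b n) * h1
  have hinf : {n | h n ≠ 0}.Infinite := by
    intro hfin
    let E := ∑ i ∈ hfin.toFinset, h i
    have hE : ∀ n, X (b n) * (1 - E) = 0 := by
      intro n
      have hEh : ∀ j, h j * E = h j := by
        intro j
        by_cases hj : h j = 0
        · simp [hj]
        · simp only [E]
          rw [Finset.mul_sum, Finset.sum_eq_single j, hhidem]
          · intro i _ hij; exact hort _ _ hij.symm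
          · intro hn; exact absurd (hfin.mem_toFinset.2 hj) hn
      have : (∑ i ∈ Finset.range (n + 1), h i) * E = ∑ i ∈ Finset.range (n + 1), h i := by
        rw [Finset.sum_mul]; exact Finset.sum_congr rfl fun i _ => hEh i
      have h3 := hXn n
      linear_combination (1 - E) * h3 - X (b n) * this
    have hJann : J ≤ (Submodule.span (F ⊗[k] F) {1 - E}).annihilator :=
      hXb _ fun n => (Submodule.mem_annihilator_span_singleton _ _).2 (hE n)
    have hXJ : ∀ a, X a ∈ J := fun a => by rw [hJX]; exact Ideal.subset_span ⟨a, rfl⟩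
    have hEJ : E ∈ J := Ideal.sum_mem _ fun i _ => hhJ i
    have hne : (1 - E) ≠ 0 := by
      intro h0
      rw [← sub_eq_zero.1 h0, hJ, RingHom.mem_ker, map_one] at hEJ
      exact one_ne_zero hEJ
    have : Module.Finite k F := Stmt14.finite_of_elem (1 - E) hne fun a => by
      have := (Submodule.mem_annihilator_span_singleton _ _).1 (hJann (hXJ a))
      rw [smul_eq_mul, sub_mul] at this
      exact sub_eq_zero.1 this
    have := Module.rank_lt_aleph0 k F
    exact absurd hdim this.ne
  refine ⟨fun i => h (Nat.nth (fun n => h n ≠ 0) i), ?_, ?_, ?_, ?_, ?_⟩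
  · exact fun i => Nat.nth_mem_of_infinite hinf i
  · exact fun i => hhidem _
  · exact fun i j hij => hort _ _ fun he => hij (Nat.nth_injective hinf he)
  · intro i
    rw [Submodule.disjoint_def]
    intro y hy hy2
    have h1 : (⨆ j, ⨆ (_ : j ≠ i), Ideal.span {h (Nat.nth (fun n => h n ≠ 0) j)}) ≤
        (Submodule.span (F ⊗[k] F) {h (Nat.nth (fun n => h n ≠ 0) i)}).annihilator := by
      refine iSup₂_le fun j hj => ?_
      rw [Ideal.span_le, Set.singleton_subset_iff]
      exact (Submodule.mem_annihilator_span_singleton _ _).2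
        (hort _ _ fun he => hj (Nat.nth_injective hinf he))
    have h2 := (Submodule.mem_annihilator_span_singleton _ _).1 (h1 hy2)
    rw [smul_eq_mul] at h2
    obtain ⟨c, rfl⟩ := Ideal.mem_span_singleton.1 hy
    have h3 := hhidem (Nat.nth (fun n => h n ≠ 0) i)
    linear_combination h2 - c * h3
  · apply le_antisymm
    · refine iSup_le fun i => ?_
      rw [Ideal.span_le, Set.singleton_subset_iff]
      exact hhJ _
    · apply hXb
      intro n
      rw [hXn n]
      apply Ideal.mul_mem_left
      refine Ideal.sum_mem _ fun i _ => ?_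
      by_cases hi : h i = 0
      · rw [hi]; exact Ideal.zero_mem _
      · obtain ⟨j, hj⟩ : i ∈ Set.range (Nat.nth (fun n => h n ≠ 0)) := by
          rw [Nat.range_nth_of_infinite hinf]; exact hi
        refine (le_iSup (fun i : ℕ => Ideal.span {h (Nat.nth (fun n => h n ≠ 0) i)}) j) ?_
        simp only [hj]
        exact Ideal.mem_span_singleton_self _
end

section
/- Let J be the kernel of the multiplication map μ: F ⊗_k F → F, viewed as an F^e-module, and view F as an F^e-module via μ. Then Hom_{F^e}(F, J) = 0 and Hom_{F^e}(J, F) = 0. -/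
open CategoryTheory Limits TensorProduct

universe u

/-- `F` is a module over `F ⊗[k] F` via the multiplication map `μ : F ⊗[k] F → F`. -/
noncomputable instance (priority := 50) mulModule (k F : Type u) [Field k] [Field F]
    [Algebra k F] : Module (F ⊗[k] F) F :=
  Module.compHom F (Algebra.TensorProduct.lmul' (S := F) k).toRingHom

/-- Contraction of the right tensor factor by a functional. -/
noncomputable def contractR {k F : Type u} [Field k] [Field F] [Algebra k F]
    (φ : F →ₗ[k] k) : F ⊗[k] F →ₗ[k] F :=
  (TensorProduct.rid k F).toLinearMap ∘ₗ φ.lTensor F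

theorem contractR_tmul {k F : Type u} [Field k] [Field F] [Algebra k F]
    (φ : F →ₗ[k] k) (a b : F) : contractR φ (a ⊗ₜ[k] b) = φ b • a := by
  simp [contractR]

theorem contractR_left {k F : Type u} [Field k] [Field F] [Algebra k F]
    (φ : F →ₗ[k] k) (a : F) (x : F ⊗[k] F) :
    contractR φ ((a ⊗ₜ[k] 1) * x) = a * contractR φ x := by
  induction x with
  | zero => simp
  | add x y hx hy => rw [mul_add, map_add, map_add, hx, hy, mul_add]
  | tmul c d => simp [contractR_tmul]

theorem contractR_right {k F : Type u} [Field k] [Field F] [Algebra k F]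
    (φ : F →ₗ[k] k) (a : F) (x : F ⊗[k] F) :
    contractR φ ((1 ⊗ₜ[k] a) * x) = contractR (φ ∘ₗ LinearMap.mulLeft k a) x := by
  induction x with
  | zero => simp
  | add x y hx hy => rw [mul_add, map_add, map_add, hx, hy]
  | tmul c d => simp [contractR_tmul]

theorem contractR_fin {k F : Type u} [Field k] [Field F] [Algebra k F] (x : F ⊗[k] F) :
    ∃ W : Submodule k F, Module.Finite k W ∧ ∀ φ : F →ₗ[k] k, contractR φ x ∈ W := by
  induction x with
  | zero => exact ⟨⊥, inferInstance, fun φ => by simp⟩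
  | add x y hx hy =>
    obtain ⟨W, hW, h⟩ := hx
    obtain ⟨W', hW', h'⟩ := hy
    refine ⟨W ⊔ W', inferInstance, fun φ => ?_⟩
    rw [map_add]
    exact add_mem (Submodule.mem_sup_left (h φ)) (Submodule.mem_sup_right (h' φ))
  | tmul c d =>
    refine ⟨Submodule.span k {c}, inferInstance, fun φ => ?_⟩
    rw [contractR_tmul]
    exact Submodule.smul_mem _ _ (Submodule.mem_span_singleton_self c)

theorem contractR_zero {k F : Type u} [Field k] [Field F] [Algebra k F] (x : F ⊗[k] F)
    (h : ∀ φ : F →ₗ[k] k, contractR φ x = 0) : x = 0 := by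
  let b := Module.Basis.ofVectorSpace k F
  apply (Algebra.TensorProduct.basis F b).repr.injective
  ext i
  have key : ∀ y : F ⊗[k] F,
      (Algebra.TensorProduct.basis F b).repr y i = contractR (b.coord i) y := by
    intro y
    induction y with
    | zero => simp
    | add x y hx hy => rw [map_add, map_add, Finsupp.add_apply, hx, hy]
    | tmul c d =>
      simp [contractR_tmul, Algebra.TensorProduct.basis_repr_tmul, Algebra.smul_def, mul_comm]
  rw [key, h]
  simp

theorem annihilated_zero {k F : Type u} [Field k] [Field F] [Algebra k F]
    (hdim : Module.rank k F = Cardinal.aleph0) (x : F ⊗[k] F)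
    (h : ∀ a : F, (a ⊗ₜ[k] 1) * x = (1 ⊗ₜ[k] a) * x) : x = 0 := by
  apply contractR_zero
  intro φ
  by_contra hne
  obtain ⟨W, hW, hx⟩ := contractR_fin x
  have htop : W = ⊤ := by
    rw [eq_top_iff]
    intro c _
    have h1 : c = contractR (φ ∘ₗ LinearMap.mulLeft k (c / contractR φ x)) x := by
      rw [← contractR_right, ← h, contractR_left, div_mul_cancel₀ _ hne]
    rw [h1]
    exact hx _
  subst htop
  have : Module.Finite k F := Module.Finite.equiv (Submodule.topEquiv (R := k) (M := F))
  exact absurd hdim (Module.rank_lt_aleph0 k F).ne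

/-- Lemma 7.3(b): let `F` be a separable algebraic field extension of `k` of
countably infinite dimension, let `F^e = F ⊗[k] F`, view `F` as an `F^e`-module via the
multiplication map `μ`, and let `J = ker μ`.  Then `Hom_{F^e}(F, J) = 0` and
`Hom_{F^e}(J, F) = 0`. -/
theorem stmt_15 (k F : Type u) [Field k] [Field F] [Algebra k F] [Algebra.IsSeparable k F]
    (hdim : Module.rank k F = Cardinal.aleph0) :
    (∀ f : F →ₗ[F ⊗[k] F]
        ↥(RingHom.ker (Algebra.TensorProduct.lmul' (S := F) k).toRingHom), f = 0) ∧
      (∀ g : ↥(RingHom.ker (Algebra.TensorProduct.lmul' (S := F) k).toRingHom)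
        →ₗ[F ⊗[k] F] F, g = 0) := by
  have hs : ∀ (x : F ⊗[k] F) (c : F),
      x • c = Algebra.TensorProduct.lmul' (S := F) k x * c := fun x c => rfl
  constructor
  · intro f
    have h1 : f 1 = 0 := by
      apply Subtype.ext
      apply annihilated_zero hdim
      intro a
      have e : (a ⊗ₜ[k] (1 : F)) • (1 : F) = ((1 : F) ⊗ₜ[k] a) • (1 : F) := by
        rw [hs, hs]; simp
      have e2 := congrArg f e
      rw [map_smul, map_smul] at e2
      exact congrArg Subtype.val e2
    ext c
    have e : c = (c ⊗ₜ[k] (1 : F)) • (1 : F) := by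
      rw [hs]; simp
    rw [e, map_smul, h1, smul_zero]
    rfl
  · intro g
    have hfu : Algebra.FormallyUnramified k F := Algebra.FormallyUnramified.of_isSeparable k F
    have hid : IsIdempotentElem
        (RingHom.ker (Algebra.TensorProduct.lmul' (S := F) k).toRingHom) := by
      have : Subsingleton (Ω[F⁄k]) := inferInstance
      exact (Ideal.cotangent_subsingleton_iff (I := KaehlerDifferential.ideal k F)).mp this
    have key : ∀ (x : F ⊗[k] F)
        (_ : x ∈ RingHom.ker (Algebra.TensorProduct.lmul' (S := F) k).toRingHom *
          RingHom.ker (Algebra.TensorProduct.lmul' (S := F) k).toRingHom)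
        (hx' : x ∈ RingHom.ker (Algebra.TensorProduct.lmul' (S := F) k).toRingHom),
        g ⟨x, hx'⟩ = 0 := by
      intro x hx
      induction hx using Submodule.mul_induction_on' with
      | mem_mul_mem m hm n hn =>
        intro hx'
        have e : (⟨m * n, hx'⟩ : RingHom.ker
          (Algebra.TensorProduct.lmul' (S := F) k).toRingHom) = m • ⟨n, hn⟩ := rfl
        have hm' : Algebra.TensorProduct.lmul' (S := F) k m = 0 := hm
        rw [e, map_smul, hs, hm', zero_mul]
      | add x hx y hy ihx ihy =>
        intro hx'
        have e : (⟨x + y, hx'⟩ : RingHom.ker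
          (Algebra.TensorProduct.lmul' (S := F) k).toRingHom) =
            ⟨x, Ideal.mul_le_left hx⟩ + ⟨y, Ideal.mul_le_left hy⟩ := rfl
        rw [e, map_add, ihx, ihy, add_zero]
    ext ⟨x, hx⟩
    exact key x (by rw [hid.eq]; exact hx) hx
end

section
/- View F as an F^e-module via the multiplication map μ: F ⊗_k F → F. Then Ext^1_{F^e}(F, F) = 0 and Hom_{F^e}(F, F^e) = 0. -/
open CategoryTheory Limits TensorProduct

universe u

lemma aux_ext {R : Type u} [CommRing R] {P2 P1 P0 X Y : Type u} [AddCommGroup P2] [AddCommGroup P1]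
    [AddCommGroup P0] [AddCommGroup X] [AddCommGroup Y] [Module R P2] [Module R P1] [Module R P0]
    [Module R X] [Module R Y] (d2 : P2 →ₗ[R] P1) (d1 : P1 →ₗ[R] P0) (ε : P0 →ₗ[R] X)
    (h2 : ∀ x, d1 x = 0 → ∃ y, d2 y = x) (h1 : ∀ x, ε x = 0 → ∃ y, d1 y = x)
    (h1' : ∀ x, ε (d1 x) = 0)
    (hε : Function.Surjective ε) [Module.Projective R P0] (p : R →ₗ[R] X)
    (hp : Function.Surjective p) (hI : ∀ f : LinearMap.ker p →ₗ[R] Y, f = 0)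
    (g : P1 →ₗ[R] Y) (hg : ∀ x, g (d2 x) = 0) : ∃ h : P0 →ₗ[R] Y, ∀ x, h (d1 x) = g x := by
  obtain ⟨t, ht⟩ := Module.projective_lifting_property p ε hp
  obtain ⟨e, he⟩ := hε (p 1)
  have hk : LinearMap.ker d1 ≤ LinearMap.ker g := by
    intro x hx
    obtain ⟨y, rfl⟩ := h2 x hx
    exact hg y
  have ht' : ∀ x, p (t x) = ε x := fun x => LinearMap.congr_fun ht x
  have hps : ∀ r : R, ε (r • e) = p r := by
    intro r
    rw [map_smul, he, ← map_smul, smul_eq_mul, mul_one]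
  let gb : LinearMap.range d1 →ₗ[R] Y :=
    ((LinearMap.ker d1).liftQ g hk) ∘ₗ d1.quotKerEquivRange.symm.toLinearMap
  have hgb : ∀ x, gb ⟨d1 x, x, rfl⟩ = g x := by
    intro x
    have : d1.quotKerEquivRange.symm ⟨d1 x, x, rfl⟩ = (LinearMap.ker d1).mkQ x := by
      rw [LinearEquiv.symm_apply_eq]; rfl
    simp only [gb, LinearMap.comp_apply, LinearEquiv.coe_coe, this]
    rfl
  let s : R →ₗ[R] P0 := LinearMap.toSpanSingleton R P0 e
  let q : P0 →ₗ[R] LinearMap.range d1 := (LinearMap.id - s ∘ₗ t).codRestrict _ (by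
    intro x
    apply h1
    change ε (x - t x • e) = 0
    rw [map_sub, hps, ht', sub_self])
  let w : LinearMap.ker p →ₗ[R] LinearMap.range d1 :=
    (s ∘ₗ (LinearMap.ker p).subtype).codRestrict _ (by
    intro x
    apply h1
    change ε (x.1 • e) = 0
    rw [hps]; exact x.2)
  have hw := hI (gb ∘ₗ w)
  refine ⟨gb ∘ₗ q, fun x => ?_⟩
  have hx : t (d1 x) ∈ LinearMap.ker p := by
    rw [LinearMap.mem_ker, ht', h1']
  have : q (d1 x) = ⟨d1 x, x, rfl⟩ - w ⟨t (d1 x), hx⟩ := by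
    apply Subtype.ext; rfl
  rw [LinearMap.comp_apply, this, map_sub, hgb]
  have h3 : gb (w ⟨t (d1 x), hx⟩) = 0 := LinearMap.congr_fun hw _
  rw [h3, sub_zero]

lemma aux_Ext (k : Type u) [Field k] (R : Type u) [CommRing R] [Algebra k R] (X Y : ModuleCat.{u} R)
    (p : R →ₗ[R] X)
    (hp : Function.Surjective p) (hI : ∀ f : LinearMap.ker p →ₗ[R] Y, f = 0) :
    Subsingleton (((Ext k (ModuleCat.{u} R) 1).obj (Opposite.op X)).obj Y) := by
  let P := projectiveResolution X
  apply ModuleCat.subsingleton_of_isZero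
  refine IsZero.of_iso ?_ (P.isoExt 1 Y)
  rw [← HomologicalComplex.exactAt_iff_isZero_homology,
    HomologicalComplex.exactAt_iff' _ 0 1 2 (by simp) (by simp),
    ShortComplex.moduleCat_exact_iff]
  intro (g : P.complex.X 1 ⟶ Y) (hg : P.complex.d 2 1 ≫ g = 0)
  have e1 := (ShortComplex.moduleCat_exact_iff _).1 (P.exact_succ 0)
  have e0 := (ShortComplex.moduleCat_exact_iff _).1 P.exact₀
  have : Module.Projective R (P.complex.X 0) :=
    (IsProjective.iff_projective (P.complex.X 0)).2 (P.projective 0)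
  obtain ⟨h, hh⟩ := aux_ext (P.complex.d 2 1).hom (P.complex.d 1 0).hom (P.π.f 0).hom
    e1 e0 (fun x => by
      have := P.complex_d_comp_π_f_zero
      exact LinearMap.congr_fun (congrArg ModuleCat.Hom.hom this) x)
    ((ModuleCat.epi_iff_surjective _).1 inferInstance) p hp hI g.hom
    (fun x => LinearMap.congr_fun (congrArg ModuleCat.Hom.hom hg) x)
  refine ⟨(ModuleCat.ofHom h : P.complex.X 0 ⟶ Y), ?_⟩
  change P.complex.d 1 0 ≫ ModuleCat.ofHom h = g
  ext x
  exact hh x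

lemma aux_smul (k F : Type u) [Field k] [Field F] [Algebra k F] (a : F ⊗[k] F) (x : F) :
    a • x = Algebra.TensorProduct.lmul' (S := F) k a * x := rfl

lemma aux_hom (k F : Type u) [Field k] [Field F] [Algebra k F]
    (hF : ¬ Module.Finite k F) (a : F ⊗[k] F)
    (ha : ∀ x : F, (x ⊗ₜ[k] (1 : F)) * a = ((1 : F) ⊗ₜ[k] x) * a) : a = 0 := by
  by_contra h0
  -- contraction with a functional
  let c : (F →ₗ[k] k) →ₗ[k] (F ⊗[k] F →ₗ[k] F) :=
    (LinearMap.compRight k (TensorProduct.lid k F).toLinearMap) ∘ₗ LinearMap.rTensorHom F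
  have hc : ∀ φ x y, c φ (x ⊗ₜ y) = φ x • y := by
    intro φ x y; simp [c]
  have hfin : ∀ b : F ⊗[k] F, Module.Finite k (LinearMap.range (c.flip b)) := by
    intro b
    induction b using TensorProduct.induction_on with
    | zero =>
      have : LinearMap.range (c.flip 0) ≤ (⊥ : Submodule k F) := by
        rintro _ ⟨φ, rfl⟩
        rw [LinearMap.flip_apply, map_zero]
        exact Submodule.zero_mem _
      exact Submodule.finiteDimensional_of_le this
    | tmul x y =>
      have : LinearMap.range (c.flip (x ⊗ₜ y)) ≤ Submodule.span k {y} := by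
        rintro _ ⟨φ, rfl⟩
        rw [LinearMap.flip_apply, hc]
        exact Submodule.smul_mem _ _ (Submodule.mem_span_singleton_self y)
      exact Submodule.finiteDimensional_of_le this
    | add b b' h h' =>
      have : LinearMap.range (c.flip (b + b')) ≤
          LinearMap.range (c.flip b) ⊔ LinearMap.range (c.flip b') := by
        rintro _ ⟨φ, rfl⟩
        rw [map_add, LinearMap.add_apply]
        exact Submodule.add_mem_sup ⟨φ, rfl⟩ ⟨φ, rfl⟩
      exact Submodule.finiteDimensional_of_le this
  obtain ⟨φ, hφ⟩ : ∃ φ, c φ a ≠ 0 := by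
    by_contra! hall
    apply h0
    let b := Module.Basis.ofVectorSpace k F
    apply (b.tensorProduct b).ext_elem
    rintro ⟨i, j⟩
    have key : ∀ z : F ⊗[k] F, (b.tensorProduct b).repr z (i, j) = b.repr (c (b.coord i) z) j := by
      intro z
      induction z using TensorProduct.induction_on with
      | zero => simp
      | tmul x y => rw [hc]; simp [mul_comm]
      | add z z' h h' => simp only [map_add, Finsupp.add_apply, h, h']
    rw [key, hall]; simp
  have h1 : ∀ x z, c φ (((1 : F) ⊗ₜ[k] x) * z) = x * c φ z := by
    intro x z
    induction z using TensorProduct.induction_on with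
    | zero => simp
    | tmul y y' => rw [Algebra.TensorProduct.tmul_mul_tmul, hc, hc, one_mul, mul_smul_comm]
    | add z z' h h' => simp only [mul_add, map_add, h, h']
  have h2 : ∀ x z, c φ ((x ⊗ₜ[k] (1 : F)) * z) = c (φ ∘ₗ LinearMap.mulLeft k x) z := by
    intro x z
    induction z using TensorProduct.induction_on with
    | zero => simp
    | tmul y y' => rw [Algebra.TensorProduct.tmul_mul_tmul, hc, hc, one_mul]; rfl
    | add z z' h h' => simp only [mul_add, map_add, h, h']
  have htop : LinearMap.range (c.flip a) = ⊤ := by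
    rw [eq_top_iff]
    intro y _
    refine ⟨φ ∘ₗ LinearMap.mulLeft k (y / c φ a), ?_⟩
    rw [LinearMap.flip_apply, ← h2, ha, h1, div_mul_cancel₀ _ hφ]
  have := hfin a
  rw [htop] at this
  exact hF (Module.finite_def.2 ((Submodule.fg_top _).1 (Module.finite_def.1 this) |> fun h => by simpa using h))

set_option synthInstance.maxHeartbeats 1000000 in
set_option maxHeartbeats 1000000 in
/-- Lemma 7.3(c): let `F` be a separable algebraic field extension of `k` of
countably infinite dimension, and view `F` as an `F^e = F ⊗[k] F`-module via the multiplication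
map.  Then `Ext¹_{F^e}(F, F) = 0` and `Hom_{F^e}(F, F^e) = 0`. -/
theorem stmt_16 (k F : Type u) [Field k] [Field F] [Algebra k F] [Algebra.IsSeparable k F]
    (hdim : Module.rank k F = Cardinal.aleph0) :
    Subsingleton (((Ext k (ModuleCat.{u} (F ⊗[k] F)) 1).obj
        (Opposite.op (ModuleCat.of (F ⊗[k] F) F))).obj (ModuleCat.of (F ⊗[k] F) F)) ∧
      (∀ f : F →ₗ[F ⊗[k] F] (F ⊗[k] F), f = 0) := by
  constructor
  · let μ : F ⊗[k] F →ₗ[F ⊗[k] F] F := LinearMap.toSpanSingleton (F ⊗[k] F) F 1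
    have hμ : ∀ a, μ a = Algebra.TensorProduct.lmul' (S := F) k a := by
      intro a
      change a • (1 : F) = _
      rw [aux_smul, mul_one]
    refine aux_Ext k (F ⊗[k] F) (ModuleCat.of _ F) (ModuleCat.of _ F) μ ?_ ?_
    · intro x
      refine ⟨x ⊗ₜ 1, ?_⟩
      rw [hμ]; simp
    · intro f
      have hfu : Algebra.FormallyUnramified k F := Algebra.FormallyUnramified.of_isSeparable k F
      have hsub : Subsingleton (KaehlerDifferential.ideal k F).Cotangent :=
        hfu.subsingleton_kaehlerDifferential
      have hid : IsIdempotentElem (KaehlerDifferential.ideal k F) :=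
        (Ideal.cotangent_subsingleton_iff _).1 hsub
      have hker : LinearMap.ker μ = KaehlerDifferential.ideal k F := by
        ext a
        rw [LinearMap.mem_ker, hμ]; rfl
      have key : ∀ z (hz : z ∈ LinearMap.ker μ), f ⟨z, hz⟩ = 0 := by
        intro z hz
        have hz' : z ∈ KaehlerDifferential.ideal k F * KaehlerDifferential.ideal k F := by
          rw [hid.eq, ← hker]; exact hz
        suffices ∃ hz : z ∈ LinearMap.ker μ, f ⟨z, hz⟩ = 0 from this.2
        refine Submodule.mul_induction_on hz' ?_ ?_
        · intro a ha b hb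
          rw [← hker] at ha hb
          refine ⟨(LinearMap.ker μ).smul_mem a hb, ?_⟩
          have e : f (a • ⟨b, hb⟩) = a • f ⟨b, hb⟩ := map_smul f a _
          refine e.trans ?_
          refine (aux_smul k F a _).trans ?_
          rw [← hμ, LinearMap.mem_ker.1 ha]
          exact zero_mul _
        · rintro a b ⟨ha, ha'⟩ ⟨hb, hb'⟩
          refine ⟨add_mem ha hb, ?_⟩
          have e : f (⟨a, ha⟩ + ⟨b, hb⟩) = f ⟨a, ha⟩ + f ⟨b, hb⟩ := map_add f _ _
          refine e.trans ?_
          rw [ha', hb', add_zero]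
      ext ⟨z, hz⟩
      exact key z hz
  · intro f
    have hF : ¬ Module.Finite k F := by
      intro h
      have := Module.rank_lt_aleph0 k F
      rw [hdim] at this
      exact lt_irrefl _ this
    have h1 : f 1 = 0 := by
      apply aux_hom k F hF
      intro x
      have e1 : f ((x ⊗ₜ[k] (1 : F)) • (1 : F)) = (x ⊗ₜ[k] (1 : F)) • f 1 := map_smul f _ _
      have e2 : f (((1 : F) ⊗ₜ[k] x) • (1 : F)) = ((1 : F) ⊗ₜ[k] x) • f 1 := map_smul f _ _
      rw [← smul_eq_mul, ← smul_eq_mul, ← e1, ← e2, aux_smul, aux_smul]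
      simp
    ext x
    have e : f ((x ⊗ₜ[k] (1 : F)) • (1 : F)) = (x ⊗ₜ[k] (1 : F)) • f 1 := map_smul f _ _
    rw [aux_smul, h1, smul_zero] at e
    simpa using e
end

section
/- The algebra F^e = F ⊗_k F has left global dimension 1 and its injective dimension as a left module over itself is 1; that is, F is smooth and htr F = gldim(F^e) = 1. -/
open CategoryTheory Limits TensorProduct

universe u

structure IdemChain {R : Type u} [CommRing R] (J : Ideal R) (e : ℕ → R) : Prop where
  zero : e 0 = 0
  mul : ∀ n m, n ≤ m → e n * e m = e n
  mem : ∀ n, e n ∈ J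
  ev : ∀ x ∈ J, ∃ N, ∀ n, N ≤ n → x * e n = x

theorem exists_idemChain {R : Type u} [CommRing R] (hV : ∀ x : R, ∃ y, x = x * x * y)
    (J : Ideal R) (hJ : ∃ x : ℕ → R, J = Ideal.span (Set.range x)) :
    ∃ e, IdemChain J e := by
  obtain ⟨x, hx⟩ := hJ
  choose y hy using hV
  let e : ℕ → R := fun n => Nat.rec 0 (fun n a => a + x n * (1 - a) * y (x n * (1 - a))) n
  have e0 : e 0 = 0 := rfl
  have es : ∀ n, e (n+1) = e n + x n * (1 - e n) * y (x n * (1 - e n)) := fun n => rfl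
  have xJ : ∀ n, x n ∈ J := fun n => hx ▸ Ideal.subset_span ⟨n, rfl⟩
  have hid : ∀ n, e n * e n = e n := by
    intro n
    induction n with
    | zero => simp [e0]
    | succ n ih =>
      rw [es]
      have h := hy (x n * (1 - e n))
      generalize y (x n * (1 - e n)) = z at *
      generalize e n = a at *
      linear_combination (1 - 2 * x n * z) * ih - z * h
  have hs : ∀ n, e n * e (n+1) = e n := by
    intro n
    rw [es]
    have ih := hid n
    linear_combination (1 - x n * y (x n * (1 - e n))) * ih
  have hm : ∀ n m, n ≤ m → e n * e m = e n := by
    intro n m h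
    induction m, h using Nat.le_induction with
    | base => exact hid n
    | succ m h ih =>
      calc e n * e (m+1) = e n * (e m * e (m+1)) := by rw [← mul_assoc, ih]
        _ = e n := by rw [hs, ih]
  have hx1 : ∀ n, x n * e (n+1) = x n := by
    intro n
    rw [es]
    have ih := hid n
    have h := hy (x n * (1 - e n))
    generalize y (x n * (1 - e n)) = z at *
    linear_combination -h - x n * x n * z * ih
  refine ⟨e, e0, hm, ?_, ?_⟩
  · intro n
    induction n with
    | zero => simp [e0]
    | succ n ih =>
      rw [es]
      exact J.add_mem ih (J.mul_mem_right _ (J.mul_mem_right _ (xJ n)))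
  · intro z hz
    rw [hx] at hz
    induction hz using Submodule.span_induction with
    | mem z h =>
      obtain ⟨n, rfl⟩ := h
      refine ⟨n+1, fun m hmn => ?_⟩
      calc x n * e m = x n * (e (n+1) * e m) := by rw [← mul_assoc, hx1]
        _ = x n := by rw [hm _ _ hmn, hx1]
    | zero => exact ⟨0, by simp⟩
    | add a b _ _ ha hb =>
      obtain ⟨N, hN⟩ := ha
      obtain ⟨M, hM⟩ := hb
      refine ⟨max N M, fun n hn => ?_⟩
      rw [add_mul, hN n (by omega), hM n (by omega)]
    | smul a b _ hb =>
      obtain ⟨N, hN⟩ := hb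
      refine ⟨N, fun n hn => ?_⟩
      rw [smul_mul_assoc, hN n hn]

section
variable {R : Type u} [CommRing R] {J : Ideal R} {e : ℕ → R} (h : IdemChain J e)
include h

theorem IdemChain.fin (x : J) : {n | (x : R) * (e (n+1) - e n) ≠ 0}.Finite := by
  obtain ⟨N, hN⟩ := h.ev x x.2
  refine (Set.finite_lt_nat N).subset fun n hn => ?_
  by_contra h'
  simp only [Set.mem_ofPred_eq, not_lt] at h'
  apply hn
  rw [mul_sub, hN _ (by omega), hN _ h', sub_self]

theorem IdemChain.exists_s : ∃ s : J →ₗ[R] (ℕ →₀ R),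
    ∀ x n, s x n = x * (e (n+1) - e n) :=
  ⟨{ toFun := fun x => Finsupp.ofSupportFinite (fun n => (x : R) * (e (n+1) - e n)) (h.fin x)
     map_add' := fun x y => by ext n; exact add_mul (x : R) y _
     map_smul' := fun x y => by ext n; exact mul_assoc x (y : R) _ }, fun x n => rfl⟩

theorem IdemChain.projective : Module.Projective R J := by
  obtain ⟨s, hs⟩ := h.exists_s
  refine Module.Projective.of_split s
    (Finsupp.linearCombination R
      (fun n => (⟨e (n+1) - e n, J.sub_mem (h.mem _) (h.mem _)⟩ : J))) ?_
  ext x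
  obtain ⟨N, hN⟩ := h.ev x x.2
  have hsub : (s x).support ⊆ Finset.range N := by
    intro n hn
    rw [Finsupp.mem_support_iff, hs] at hn
    by_contra h'
    simp only [Finset.mem_range, not_lt] at h'
    apply hn
    rw [mul_sub, hN _ (by omega), hN _ h', sub_self]
  simp only [LinearMap.comp_apply, Finsupp.linearCombination_apply, LinearMap.id_apply]
  rw [Finsupp.sum_of_support_subset _ hsub _ (by simp)]
  simp only [hs, AddSubmonoidClass.coe_finsetSum, Submodule.coe_smul, smul_eq_mul]
  have : ∀ n, (x : R) * (e (n+1) - e n) * (e (n+1) - e n) = x * e (n+1) - x * e n := by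
    intro n
    have h1 := h.mul n (n+1) (by omega)
    have h2 := h.mul n n le_rfl
    have h3 := h.mul (n+1) (n+1) le_rfl
    linear_combination (x : R) * (h3 + h2 - 2 * h1)
  rw [Finset.sum_congr rfl fun n _ => this n, Finset.sum_range_sub (fun n => (x : R) * e n), h.zero,
    mul_zero, sub_zero, hN N le_rfl]

theorem IdemChain.not_baer {F : Type u} [Field F] [Infinite F] [Algebra F R]
    (halg : ∀ x : R, IsAlgebraic F x) (hfg : ¬ J.FG) : ¬ Module.Baer R R := by
  intro hb
  classical
  apply hfg
  obtain ⟨s, hs⟩ := h.exists_s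
  let a : ℕ → F := Infinite.natEmbedding F
  have ha : Function.Injective a := (Infinite.natEmbedding F).injective
  let f : ℕ → R := fun n => e (n+1) - e n
  have hf : ∀ n m, f n * f m = if n = m then f n else 0 := by
    intro n m
    have h1 := h.mul n (n+1) (by omega)
    have h2 := h.mul n n le_rfl
    have h3 := h.mul (n+1) (n+1) le_rfl
    simp only [f]
    split_ifs with hnm
    · subst hnm
      linear_combination (h3 + h2 - 2 * h1)
    · rcases lt_or_gt_of_ne hnm with h' | h'
      · linear_combination h.mul (n+1) (m+1) (by omega) - h.mul (n+1) m (by omega) -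
          h.mul n (m+1) (by omega) + h.mul n m (by omega)
      · linear_combination h.mul (m+1) (n+1) (by omega) - h.mul (m+1) n (by omega) -
          h.mul m (n+1) (by omega) + h.mul m n (by omega)
  obtain ⟨g, hg⟩ := hb J ((Finsupp.linearCombination R (fun n => a n • f n)) ∘ₗ s)
  have hgf : ∀ n, f n * g 1 = a n • f n := by
    intro n
    have hmem : f n ∈ J := J.sub_mem (h.mem _) (h.mem _)
    have h1 := hg (f n) hmem
    have h2 : s ⟨f n, hmem⟩ = Finsupp.single n (f n) := by
      ext m
      rw [hs, Finsupp.single_apply]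
      exact hf n m
    rw [LinearMap.comp_apply, h2, Finsupp.linearCombination_single, smul_eq_mul,
      mul_smul_comm, hf, if_pos rfl] at h1
    rw [← h1, ← smul_eq_mul, ← map_smul, smul_eq_mul, mul_one]
  obtain ⟨p, hp, hpx⟩ := halg (g 1)
  have hev : ∀ (q : Polynomial F) n, f n * Polynomial.aeval (g 1) q = (q.eval (a n)) • f n := by
    intro q n
    induction q using Polynomial.induction_on' with
    | add p q h1 h2 => rw [map_add, mul_add, h1, h2, Polynomial.eval_add, add_smul]
    | monomial m c =>
      rw [Polynomial.aeval_monomial, Polynomial.eval_monomial, mul_left_comm,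
        ← Algebra.smul_def, mul_smul]
      congr 1
      induction m with
      | zero => simp
      | succ m ih => rw [pow_succ, ← mul_assoc, ih, smul_mul_assoc, hgf, smul_smul, pow_succ]
  have hfin : {n | f n ≠ 0}.Finite := by
    refine Set.Finite.subset (Set.Finite.preimage ha.injOn (p.roots.toFinset.finite_toSet))
      fun n hn => ?_
    have := hev p n
    rw [hpx, mul_zero, eq_comm, smul_eq_zero_iff_left hn] at this
    simpa [hp] using this
  obtain ⟨N, hN⟩ := hfin.bddAbove
  have hst : ∀ n, N + 1 ≤ n → e n = e (N+1) := by
    intro n hn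
    induction n, hn using Nat.le_induction with
    | base => rfl
    | succ n hn ih =>
      rw [← ih]
      by_contra hne
      have := hN (show f n ≠ 0 from sub_ne_zero.mpr hne)
      omega
  refine ⟨{e (N+1)}, ?_⟩
  apply le_antisymm
  · rw [Submodule.span_le]
    simpa using h.mem _
  · intro x hx
    obtain ⟨M, hM⟩ := h.ev x hx
    have := hM (max M (N+1)) (le_max_left _ _)
    rw [hst _ (le_max_right _ _)] at this
    rw [← this]
    exact Ideal.mul_mem_left _ _ (Ideal.subset_span (by simp))
end

theorem tens_reduced (k F : Type u) [Field k] [Field F] [Algebra k F] [Algebra.IsSeparable k F] :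
    IsReduced (F ⊗[k] F) := by
  apply IsReduced.tensorProduct_of_flat_of_forall_fg
  intro B hB
  let E : IntermediateField k F := B.toIntermediateField' (Subalgebra.isField_of_algebraic B)
  have : Algebra.FiniteType k E := B.fg_iff_finiteType.mp hB
  have : Algebra.IsSeparable k E := inferInstance
  have := Algebra.FormallyUnramified.of_isSeparable k E
  have : IsReduced (F ⊗[k] E) := Algebra.FormallyUnramified.isReduced_of_field F (F ⊗[k] E)
  exact this

theorem tens_alg (k F : Type u) [Field k] [Field F] [Algebra k F] [Algebra.IsSeparable k F]
    (x : F ⊗[k] F) : IsAlgebraic F x := by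
  have : Algebra.IsIntegral F (F ⊗[k] F) := inferInstance
  exact (this.isIntegral x).isAlgebraic

theorem vnr_of_alg {F R : Type u} [Field F] [CommRing R] [Algebra F R] [IsReduced R] (x : R)
    (hx : IsAlgebraic F x) : ∃ y, x = x * x * y := by
  obtain ⟨p, hp, hpx⟩ := hx
  obtain ⟨q, hq, hnd⟩ := Polynomial.exists_eq_pow_rootMultiplicity_mul_and_not_dvd p hp 0
  generalize p.rootMultiplicity 0 = m at hq
  simp only [map_zero, sub_zero] at hq hnd
  rw [Polynomial.X_dvd_iff] at hnd
  have h0 : x * Polynomial.aeval x q = 0 := by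
    apply IsReduced.eq_zero
    refine ⟨m + 1, ?_⟩
    rw [hq, map_mul, map_pow, Polynomial.aeval_X] at hpx
    calc _ = x * (Polynomial.aeval x q) ^ m * (x ^ m * Polynomial.aeval x q) := by ring
      _ = 0 := by rw [hpx, mul_zero]
  rw [← Polynomial.X_mul_divX_add q, map_add, map_mul, Polynomial.aeval_X, Polynomial.aeval_C] at h0
  have hu : algebraMap F R (q.coeff 0)⁻¹ * algebraMap F R (q.coeff 0) = 1 := by
    rw [← map_mul, inv_mul_cancel₀ hnd, map_one]
  refine ⟨- Polynomial.aeval x q.divX * algebraMap F R (q.coeff 0)⁻¹, ?_⟩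
  linear_combination (algebraMap F R (q.coeff 0)⁻¹) * h0 - x * hu

theorem tens_countable (k F : Type u) [Field k] [Field F] [Algebra k F]
    (hdim : Module.rank k F = Cardinal.aleph0) (J : Ideal (F ⊗[k] F)) :
    ∃ x : ℕ → F ⊗[k] F, J = Ideal.span (Set.range x) := by
  have h1 : Module.rank F (F ⊗[k] F) = Cardinal.aleph0 := by
    rw [Module.rank_baseChange, hdim, Cardinal.lift_aleph0]
  have h2 : Module.rank F (J.restrictScalars F) ≤ Cardinal.aleph0 :=
    (Submodule.rank_le _).trans h1.le
  let b := Module.Free.chooseBasis F (J.restrictScalars F)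
  have hc : Countable (Module.Free.ChooseBasisIndex F (J.restrictScalars F)) := by
    rw [← Cardinal.mk_le_aleph0_iff, b.mk_eq_rank'']
    exact h2
  let s : Set (F ⊗[k] F) := insert 0 (Set.range fun i => (b i : F ⊗[k] F))
  have hs : s.Countable := (Set.countable_range _).insert 0
  obtain ⟨x, hx⟩ := hs.exists_eq_range ⟨0, Set.mem_insert _ _⟩
  refine ⟨x, ?_⟩
  rw [← hx]
  apply le_antisymm
  · intro z hz
    have h3 := b.linearCombination_repr ⟨z, hz⟩
    have h4 := congrArg Subtype.val h3
    rw [Finsupp.linearCombination_apply, Finsupp.sum, AddSubmonoidClass.coe_finsetSum] at h4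
    rw [← (show _ = z from h4)]
    refine Ideal.sum_mem _ fun i _ => ?_
    rw [Submodule.coe_smul, Algebra.smul_def]
    exact Ideal.mul_mem_left _ _ (Ideal.subset_span (Set.mem_insert_of_mem _ ⟨i, rfl⟩))
  · rw [Ideal.span_le]
    rintro z (rfl | ⟨i, rfl⟩)
    · exact J.zero_mem
    · exact (b i).2

theorem tens_ker_not_fg (k F : Type u) [Field k] [Field F] [Algebra k F]
    (hV : ∀ x : F ⊗[k] F, ∃ y, x = x * x * y)
    (hdim : ¬ Module.Finite k F) :
    ¬ (RingHom.ker (Algebra.TensorProduct.lmul' (S := F) k)).FG := by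
  intro hfg
  set I := RingHom.ker (Algebra.TensorProduct.lmul' (S := F) k) with hI
  have hid : IsIdempotentElem I := by
    apply le_antisymm Ideal.mul_le_left
    intro x hx
    obtain ⟨y, hy⟩ := hV x
    rw [hy]
    exact Ideal.mul_mem_right _ _ (Ideal.mul_mem_mul hx hx)
  obtain ⟨e, he, heI⟩ := (Ideal.isIdempotentElem_iff_of_fg I hfg).mp hid
  have hne : (1 - e) ≠ 0 := by
    intro h
    have : e ∈ I := heI ▸ Ideal.mem_span_singleton_self e
    rw [← sub_eq_zero.mp h, hI, RingHom.mem_ker, map_one] at this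
    exact one_ne_zero this
  have hcomm : ∀ x : F, (x ⊗ₜ[k] (1:F)) * (1 - e) = ((1:F) ⊗ₜ[k] x) * (1 - e) := by
    intro x
    have : x ⊗ₜ[k] (1:F) - (1:F) ⊗ₜ[k] x ∈ I := by
      rw [hI, RingHom.mem_ker, map_sub]; simp
    rw [heI] at this
    obtain ⟨z, hz⟩ := Ideal.mem_span_singleton'.mp this
    rw [← sub_eq_zero, ← sub_mul, ← hz, mul_assoc, mul_sub, he.eq]
    simp
  generalize 1 - e = t at hne hcomm
  let T : (F →ₗ[k] k) → F ⊗[k] F →ₗ[k] F := fun φ =>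
    (TensorProduct.lid k F).toLinearMap ∘ₗ LinearMap.rTensor F φ
  have hT : ∀ φ a b, T φ (a ⊗ₜ b) = φ a • b := fun φ a b => by simp [T]
  have hW : ∃ W : Submodule k F, W.FG ∧ ∀ φ x, T φ ((x ⊗ₜ 1) * t) ∈ W := by
    clear hcomm hne
    induction t using TensorProduct.induction_on with
    | zero => exact ⟨⊥, Submodule.fg_bot, by simp⟩
    | tmul a b =>
      refine ⟨Submodule.span k {b}, Submodule.fg_span_singleton b, fun φ x => ?_⟩
      rw [Algebra.TensorProduct.tmul_mul_tmul, hT, one_mul]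
      exact Submodule.smul_mem _ _ (Submodule.mem_span_singleton_self b)
    | add a b ha hb =>
      obtain ⟨W, hW, h⟩ := ha
      obtain ⟨W', hW', h'⟩ := hb
      refine ⟨W ⊔ W', hW.sup hW', fun φ x => ?_⟩
      rw [mul_add, map_add]
      exact Submodule.add_mem_sup (h φ x) (h' φ x)
  have hmul : ∀ φ x, T φ ((1 ⊗ₜ x) * t) = x * T φ t := by
    clear hcomm hne hW
    intro φ x
    induction t using TensorProduct.induction_on with
    | zero => simp
    | tmul a b => rw [Algebra.TensorProduct.tmul_mul_tmul, hT, hT, one_mul, mul_smul_comm]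
    | add a b ha hb => rw [mul_add, map_add, map_add, ha, hb, mul_add]
  have hφ : ∃ φ, T φ t ≠ 0 := by
    by_contra! h
    apply hne
    let b := Module.Free.chooseBasis k F
    apply (TensorProduct.equivFinsuppOfBasisLeft (N := F) b).injective
    ext i
    rw [TensorProduct.equivFinsuppOfBasisLeft_apply, map_zero]
    exact h (b.coord i)
  obtain ⟨φ, hφ⟩ := hφ
  obtain ⟨W, hWfg, hW⟩ := hW
  have : Module.Finite k W := Module.Finite.iff_fg.mpr hWfg
  apply hdim
  refine Module.Finite.of_injective ((LinearMap.mulRight k (T φ t)).codRestrict W fun x => ?_) ?_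
  · rw [LinearMap.mulRight_apply, ← hmul, ← hcomm]
    exact hW φ x
  · intro x y hxy
    have := congrArg Subtype.val hxy
    simpa [hφ] using this

section
universe v w
variable {C : Type w} [Category.{v} C] [Abelian C]

theorem exists_projRes {S : ShortComplex C} (hS : S.ShortExact) (h1 : Projective S.X₁)
    (h2 : Projective S.X₂) :
    ∃ P : ProjectiveResolution S.X₃, ∀ i : ℕ, 1 < i → IsZero (P.complex.X i) := by
  have := hS.mono_f
  have := hS.epi_g
  have hr : (ComplexShape.down ℕ).Rel 1 0 := by simp
  let K : ChainComplex C ℕ := HomologicalComplex.double S.f hr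
  have hz : ∀ i : ℕ, 1 < i → IsZero (K.X i) := fun i hi =>
    HomologicalComplex.isZero_double_X S.f hr i (by omega) (by omega)
  let e1 : K.X 1 ≅ S.X₁ := HomologicalComplex.doubleXIso₀ S.f hr
  let e0 : K.X 0 ≅ S.X₂ := HomologicalComplex.doubleXIso₁ S.f hr (by omega)
  have hd : K.d 1 0 = e1.hom ≫ S.f ≫ e0.inv := HomologicalComplex.double_d S.f hr (by omega)
  have hm : Mono (K.d 1 0) := by rw [hd]; infer_instance
  clear_value K e1 e0
  have hp : ∀ n, Projective (K.X n)
    | 0 => Projective.of_iso e0.symm h2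
    | 1 => Projective.of_iso e1.symm h1
    | (n+2) => (hz _ (by omega)).projective
  refine ⟨⟨K, hp, (ChainComplex.toSingle₀Equiv K S.X₃).symm ⟨e0.hom ≫ S.g, by simp [hd]⟩, ⟨fun n => ?_⟩⟩, hz⟩
  rcases n with _ | _ | n
  · rw [ChainComplex.quasiIsoAt₀_iff, ShortComplex.quasiIso_iff_of_zeros']
    · refine (ShortComplex.exact_and_epi_g_iff_of_iso (S₂ := S) ?_).2 ⟨hS.exact, inferInstance⟩
      refine ShortComplex.isoMk e1 e0 (Iso.refl _) ?_ ?_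
      · change e1.hom ≫ S.f = K.d 1 0 ≫ e0.hom
        simp [hd]
      · simp
        exact (Category.comp_id _).symm
    · exact K.shape 0 0 (by simp)
    · rfl
    · rfl
  · rw [quasiIsoAt_iff_exactAt']
    · rw [HomologicalComplex.exactAt_iff' _ 2 1 0 (by simp) (by simp)]
      rw [ShortComplex.exact_iff_mono]
      · exact hm
      · exact (hz 2 (by omega)).eq_of_src _ _
    · apply ChainComplex.exactAt_succ_single_obj
  · rw [quasiIsoAt_iff_exactAt']
    · rw [HomologicalComplex.exactAt_iff' _ (n+3) (n+2) (n+1) (by simp) (by simp)]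
      exact ShortComplex.exact_of_isZero_X₂ _ (hz (n+2) (by omega))
    · apply ChainComplex.exactAt_succ_single_obj

theorem exists_injRes {S : ShortComplex C} (hS : S.ShortExact) (h2 : Injective S.X₂)
    (h3 : Injective S.X₃) :
    ∃ P : InjectiveResolution S.X₁, ∀ i : ℕ, 1 < i → IsZero (P.cocomplex.X i) := by
  have := hS.mono_f
  have := hS.epi_g
  have hr : (ComplexShape.up ℕ).Rel 0 1 := by simp
  let K : CochainComplex C ℕ := HomologicalComplex.double S.g hr
  have hz : ∀ i : ℕ, 1 < i → IsZero (K.X i) := fun i hi =>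
    HomologicalComplex.isZero_double_X S.g hr i (by omega) (by omega)
  let e0 : K.X 0 ≅ S.X₂ := HomologicalComplex.doubleXIso₀ S.g hr
  let e1 : K.X 1 ≅ S.X₃ := HomologicalComplex.doubleXIso₁ S.g hr (by omega)
  have hd : K.d 0 1 = e0.hom ≫ S.g ≫ e1.inv := HomologicalComplex.double_d S.g hr (by omega)
  have hm : Epi (K.d 0 1) := by rw [hd]; infer_instance
  clear_value K e1 e0
  have hp : ∀ n, Injective (K.X n)
    | 0 => Injective.of_iso e0.symm h2
    | 1 => Injective.of_iso e1.symm h3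
    | (n+2) => (hz _ (by omega)).injective
  refine ⟨⟨K, hp, (CochainComplex.fromSingle₀Equiv K S.X₁).symm ⟨S.f ≫ e0.inv, by simp [hd]⟩, ⟨fun n => ?_⟩⟩, hz⟩
  rcases n with _ | _ | n
  · rw [CochainComplex.quasiIsoAt₀_iff, ShortComplex.quasiIso_iff_of_zeros]
    · refine (ShortComplex.exact_and_mono_f_iff_of_iso (S₂ := S) ?_).2 ⟨hS.exact, inferInstance⟩
      refine ShortComplex.isoMk (Iso.refl _) e0 e1 ?_ ?_
      · refine (Category.id_comp _).trans ?_
        change S.f = ((CochainComplex.fromSingle₀Equiv K S.X₁).symm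
          ⟨S.f ≫ e0.inv, by simp [hd]⟩).f 0 ≫ e0.hom
        simp
      · change e0.hom ≫ S.g = K.d 0 1 ≫ e1.hom
        simp [hd]
    · rfl
    · rfl
    · exact K.shape 0 0 (by simp)
  · rw [quasiIsoAt_iff_exactAt]
    · rw [HomologicalComplex.exactAt_iff' _ 0 1 2 (by simp) (by simp)]
      rw [ShortComplex.exact_iff_epi]
      · exact hm
      · exact (hz 2 (by omega)).eq_of_tgt _ _
    · apply CochainComplex.exactAt_succ_single_obj
  · rw [quasiIsoAt_iff_exactAt]
    · rw [HomologicalComplex.exactAt_iff' _ (n+1) (n+2) (n+3) (by simp) (by simp)]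
      exact ShortComplex.exact_of_isZero_X₂ _ (hz (n+2) (by omega))
    · apply CochainComplex.exactAt_succ_single_obj

theorem projective_of_res {M : C} (P : ProjectiveResolution M)
    (h : ∀ i : ℕ, 0 < i → IsZero (P.complex.X i)) : Projective M := by
  have h0 : P.complex.d 1 0 = 0 := (h 1 (by omega)).eq_of_src _ _
  have h1 : IsIso (Cofork.π P.cokernelCofork) :=
    isIso_colimit_cocone_parallelPair_of_eq h0 P.isColimitCokernelCofork
  exact Projective.of_iso (@asIso _ _ _ _ (Cofork.π P.cokernelCofork) h1) (P.projective 0)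

theorem injective_of_res {M : C} (P : InjectiveResolution M)
    (h : ∀ i : ℕ, 0 < i → IsZero (P.cocomplex.X i)) : Injective M := by
  have h0 : P.cocomplex.d 0 1 = 0 := (h 1 (by omega)).eq_of_tgt _ _
  have : IsIso (P.ι.f 0) := isIso_limit_cone_parallelPair_of_eq h0 P.isLimitKernelFork
  exact Injective.of_iso (asIso (P.ι.f 0)).symm (P.injective 0)
end

theorem exists_baer_embedding (R : Type u) [CommRing R] (A : Type u) [AddCommGroup A] [Module R A] :
    ∃ (Q : Type u) (_ : AddCommGroup Q) (_ : Module R Q) (_ : Module.Baer R Q) (j : A →ₗ[R] Q),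
      Function.Injective j := by
  refine ⟨((Injective.under (ModuleCat.of R A) : ModuleCat.{u} R) : Type u), inferInstance,
    inferInstance, ?_,
    (Injective.ι (ModuleCat.of R A)).hom, (ModuleCat.mono_iff_injective _).mp inferInstance⟩
  apply Module.Baer.of_injective
  exact (Module.injective_iff_injective_object R _).mpr
    (inferInstanceAs (Injective (Injective.under (ModuleCat.of R A))))

section
variable {R : Type u} [CommRing R] (hP : ∀ J : Ideal R, Module.Projective R J)
include hP

theorem baer_of_surj {Q Q' : Type u} [AddCommGroup Q] [Module R Q] [AddCommGroup Q'] [Module R Q']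
    (hQ : Module.Baer R Q) (q : Q →ₗ[R] Q') (hq : Function.Surjective q) : Module.Baer R Q' := by
  intro J g
  have := hP J
  obtain ⟨g', hg'⟩ := Module.projective_lifting_property q g hq
  obtain ⟨l, hl⟩ := hQ J g'
  refine ⟨q ∘ₗ l, fun x hx => ?_⟩
  rw [LinearMap.comp_apply, hl, ← hg']; rfl

theorem proj_of_inj {K P : Type u} [AddCommGroup K] [Module R K] [AddCommGroup P] [Module R P]
    [Module.Projective R P] (i : K →ₗ[R] P) (hi : Function.Injective i) :
    Module.Projective R K := by
  refine Module.Projective.of_lifting_property'' (fun f hf => ?_)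
  obtain ⟨Q, _, _, hQ, j, hj⟩ := exists_baer_embedding R (K →₀ R)
  let N : Submodule R Q := (LinearMap.ker f).map j
  have hQN : Module.Baer R (Q ⧸ N) := baer_of_surj hP hQ N.mkQ N.mkQ_surjective
  let hb : K →ₗ[R] Q ⧸ N := ((LinearMap.ker f).mapQ N j (Submodule.le_comap_map _ _)) ∘ₗ
    (LinearMap.quotKerEquivOfSurjective f hf).symm.toLinearMap
  have hhb : ∀ a, hb (f a) = N.mkQ (j a) := by
    intro a
    have : (LinearMap.quotKerEquivOfSurjective f hf).symm (f a) = (LinearMap.ker f).mkQ a := by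
      rw [LinearEquiv.symm_apply_eq]; rfl
    simp only [hb, LinearMap.comp_apply, LinearEquiv.coe_coe, this]
    rfl
  obtain ⟨g, hg⟩ := hQN.extension_property i hi hb
  obtain ⟨l, hl⟩ := Module.projective_lifting_property N.mkQ g N.mkQ_surjective
  have key : ∀ x, ∃ a, l (i x) = j a ∧ f a = x := by
    intro x
    obtain ⟨a, rfl⟩ := hf x
    have h1 : N.mkQ (l (i (f a))) = N.mkQ (j a) := by
      rw [← hhb, ← hg, ← hl]; rfl
    have h2 : l (i (f a)) - j a ∈ N := (Submodule.Quotient.eq N).mp h1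
    obtain ⟨n, hn, hn'⟩ := h2
    refine ⟨a + n, ?_, ?_⟩
    · rw [map_add, hn']; abel
    · rw [map_add, LinearMap.mem_ker.mp hn, add_zero]
  refine ⟨(LinearEquiv.ofInjective j hj).symm.toLinearMap ∘ₗ
    (l ∘ₗ i).codRestrict (LinearMap.range j) fun x => ?_, ?_⟩
  · obtain ⟨a, ha, _⟩ := key x
    exact ⟨a, ha.symm⟩
  · ext x
    obtain ⟨a, ha, hx⟩ := key x
    simp only [LinearMap.comp_apply, LinearEquiv.coe_coe, LinearMap.id_apply]
    rw [show (l ∘ₗ i).codRestrict (LinearMap.range j) _ x = LinearEquiv.ofInjective j hj a from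
      Subtype.ext ha, LinearEquiv.symm_apply_apply, hx]
end

section
variable {R : Type u} [CommRing R]

theorem projDim_le_one (hP : ∀ J : Ideal R, Module.Projective R J) (M : ModuleCat.{u} R) :
    M.projDim ≤ 1 := by
  let g : (M →₀ R) →ₗ[R] M := Finsupp.linearCombination R id
  have hg : Function.Surjective g := Finsupp.linearCombination_surjective _ Function.surjective_id
  have hK : Module.Projective R (LinearMap.ker g) :=
    proj_of_inj hP (K := LinearMap.ker g) (P := M →₀ R) (LinearMap.ker g).subtype (Submodule.subtype_injective _)
  let S : ShortComplex (ModuleCat.{u} R) :=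
    { X₁ := ModuleCat.of R (LinearMap.ker g), X₂ := ModuleCat.of R (M →₀ R), X₃ := M
      f := ModuleCat.ofHom (LinearMap.ker g).subtype
      g := ModuleCat.ofHom g
      zero := by ext x; exact x.2 }
  have hS : S.ShortExact :=
    { exact := by
        rw [ShortComplex.moduleCat_exact_iff]
        intro x hx
        exact ⟨⟨x, hx⟩, rfl⟩
      mono_f := (ModuleCat.mono_iff_injective _).mpr (Submodule.subtype_injective _)
      epi_g := (ModuleCat.epi_iff_surjective _).mpr hg }
  obtain ⟨P, h⟩ := exists_projRes hS ((IsProjective.iff_projective _).mp hK)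
    ((IsProjective.iff_projective (R := R) (M →₀ R)).mp inferInstance)
  exact sInf_le ⟨P, fun i hi => h i (by exact_mod_cast hi)⟩

theorem injDim_le_one (hP : ∀ J : Ideal R, Module.Projective R J) (M : ModuleCat.{u} R) :
    M.injDim ≤ 1 := by
  obtain ⟨Q, _, _, hQ, j, hj⟩ := exists_baer_embedding R M
  let N : Submodule R Q := LinearMap.range j
  have hQN : Module.Baer R (Q ⧸ N) := baer_of_surj hP hQ N.mkQ N.mkQ_surjective
  let S : ShortComplex (ModuleCat.{u} R) :=
    { X₁ := M, X₂ := ModuleCat.of R Q, X₃ := ModuleCat.of R (Q ⧸ N)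
      f := ModuleCat.ofHom j
      g := ModuleCat.ofHom N.mkQ
      zero := by ext x; exact (Submodule.Quotient.mk_eq_zero N).mpr ⟨x, rfl⟩ }
  have hS : S.ShortExact :=
    { exact := by
        rw [ShortComplex.moduleCat_exact_iff]
        intro x hx
        exact (Submodule.Quotient.mk_eq_zero N).mp hx
      mono_f := (ModuleCat.mono_iff_injective _).mpr hj
      epi_g := (ModuleCat.epi_iff_surjective _).mpr N.mkQ_surjective }
  obtain ⟨P, h⟩ := exists_injRes hS ((Module.injective_iff_injective_object _ _).mp hQ.injective)
    ((Module.injective_iff_injective_object _ _).mp hQN.injective)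
  exact sInf_le ⟨P, fun i hi => h i (by exact_mod_cast hi)⟩

theorem projective_of_projDim (M : ModuleCat.{u} R) (h : M.projDim < 1) :
    Module.Projective R M := by
  obtain ⟨n, ⟨P, hP⟩, hn⟩ := sInf_lt_iff.mp h
  rw [Order.lt_one_iff] at hn
  subst hn
  have := projective_of_res P fun i hi => hP i (by exact_mod_cast hi)
  exact (IsProjective.iff_projective M).mpr this

theorem injective_of_injDim (M : ModuleCat.{u} R) (h : M.injDim < 1) :
    Module.Injective R M := by
  obtain ⟨n, ⟨P, hP⟩, hn⟩ := sInf_lt_iff.mp h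
  rw [Order.lt_one_iff] at hn
  subst hn
  have := injective_of_res P fun i hi => hP i (by exact_mod_cast hi)
  exact (Module.injective_iff_injective_object R M).mpr this
end

/-- Proposition 7.1(a): let `F` be a separable algebraic field extension of `k`
of countably infinite dimension.  Then `F` is smooth (the projective dimension of `F` as an
`F^e = F ⊗[k] F`-module is finite), the left global dimension of `F^e` is `1`, and
`htr F = injdim F^e = 1`. -/
theorem stmt_18 (k F : Type u) [Field k] [Field F] [Algebra k F] [Algebra.IsSeparable k F]
    (hdim : Module.rank k F = Cardinal.aleph0) :
    ModuleCat.projDim (ModuleCat.of (F ⊗[k] F) F) ≠ ⊤ ∧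
      Ring.globalDim (F ⊗[k] F) = 1 ∧
      Ring.selfInjDim (F ⊗[k] F) = 1 := by
  have hred := tens_reduced k F
  have hV : ∀ x : F ⊗[k] F, ∃ y, x = x * x * y := fun x => vnr_of_alg x (tens_alg k F x)
  have hch : ∀ J : Ideal (F ⊗[k] F), ∃ e, IdemChain J e := fun J =>
    exists_idemChain hV J (tens_countable k F hdim J)
  have hP : ∀ J : Ideal (F ⊗[k] F), Module.Projective (F ⊗[k] F) J := fun J => by
    obtain ⟨e, he⟩ := hch J
    exact he.projective
  have hnf : ¬ Module.Finite k F := by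
    intro h
    have := Module.rank_lt_aleph0 k F
    rw [hdim] at this
    exact lt_irrefl _ this
  have hinf : Infinite F := by
    by_contra h
    rw [not_infinite_iff_finite] at h
    exact hnf inferInstance
  have hI := tens_ker_not_fg k F hV hnf
  refine ⟨?_, ?_, ?_⟩
  · exact ne_top_of_le_ne_top (by simp) (projDim_le_one hP _)
  · apply le_antisymm (iSup_le fun M => projDim_le_one hP M)
    by_contra h
    rw [not_le] at h
    apply hI
    set I := RingHom.ker (Algebra.TensorProduct.lmul' (S := F) k)
    have h1 : Module.Projective (F ⊗[k] F) ((F ⊗[k] F) ⧸ I) :=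
      projective_of_projDim (ModuleCat.of (F ⊗[k] F) ((F ⊗[k] F) ⧸ I))
        ((le_iSup (fun M : ModuleCat.{u} (F ⊗[k] F) => M.projDim) _).trans_lt h)
    have h2 : Module.FinitePresentation (F ⊗[k] F) ((F ⊗[k] F) ⧸ I) :=
      Module.finitePresentation_of_projective _ _
    have h3 := Module.FinitePresentation.fg_ker (Submodule.mkQ I) (Submodule.mkQ_surjective I)
    rwa [Submodule.ker_mkQ] at h3
  · apply le_antisymm (injDim_le_one hP _)
    by_contra h
    rw [not_le] at h
    have hinj : Module.Injective (F ⊗[k] F) (F ⊗[k] F) := injective_of_injDim _ h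
    obtain ⟨e, he⟩ := hch (RingHom.ker (Algebra.TensorProduct.lmul' (S := F) k))
    exact he.not_baer (tens_alg k F) hI (Module.Baer.of_injective hinj)
end

section
/- Let U be a division k-algebra such that F ⊗_k U is a (left) noetherian ring. Then F ⊗_k U is a semisimple artinian ring; in particular its injective dimension over itself and its global dimension are 0. -/
open CategoryTheory Limits TensorProduct

universe u

theorem aux_proj (k E U : Type u) [Field k] [Field E] [Algebra k E]
    [DivisionRing U] [Algebra k U] (J : Ideal (E ⊗[k] U)) :
    ∃ p : (E ⊗[k] U) →ₗ[k] (E ⊗[k] U), (∀ m, p m ∈ J) ∧ (∀ m ∈ J, p m = m) ∧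
      ∀ (u : U) m, p ((1 ⊗ₜ u) * m) = (1 ⊗ₜ u) * p m := by
  let : Module U (E ⊗[k] U) := Module.compHom _
    (Algebra.TensorProduct.includeRight : U →ₐ[k] E ⊗[k] U).toRingHom
  have hs : ∀ (u : U) (m : E ⊗[k] U), u • m = (1 ⊗ₜ u) * m := fun u m => rfl
  let J' : Submodule U (E ⊗[k] U) :=
    { carrier := J
      add_mem' := fun ha hb => J.add_mem ha hb
      zero_mem' := J.zero_mem
      smul_mem' := fun u m hm => J.mul_mem_left _ hm }
  obtain ⟨f, hf⟩ := J'.subtype.exists_leftInverse_of_injective (by simp)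
  have hu : ∀ (u : U) m, ((f ((1 ⊗ₜ u) * m) : J') : E ⊗[k] U) = (1 ⊗ₜ u) * (f m : E ⊗[k] U) := by
    intro u m
    rw [← hs, map_smul]; rfl
  refine ⟨{ toFun := fun m => (f m : E ⊗[k] U), map_add' := by simp, map_smul' := ?_ }, 
    fun m => (f m).2, ?_, hu⟩
  · intro c m
    have h1 : ∀ x : E ⊗[k] U, c • x = ((1 : E) ⊗ₜ[k] (algebraMap k U c)) * x := by
      intro x
      rw [Algebra.smul_def, Algebra.TensorProduct.algebraMap_apply']
    simp only [RingHom.id_apply]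
    rw [h1, hu, ← h1]
  · intro m hm
    have := LinearMap.congr_fun hf (⟨m, hm⟩ : J')
    exact congrArg Subtype.val this

theorem aux_fin (k E U : Type u) [Field k] [Field E] [Algebra k E] [Algebra.IsSeparable k E]
    [FiniteDimensional k E] [DivisionRing U] [Algebra k U] : IsSemisimpleRing (E ⊗[k] U) := by
  refine (isSemisimpleModule_iff _ _).mpr ⟨fun J => ?_⟩
  obtain ⟨p, hpJ, hpid, hpu⟩ := aux_proj k E U J
  have := Algebra.FormallyUnramified.of_isSeparable k E
  obtain ⟨t, ht, ht1⟩ := (Algebra.FormallyUnramified.iff_exists_tensorProduct (R := k) (S := E)).mp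
    inferInstance
  let i : E →ₐ[k] E ⊗[k] U := Algebra.TensorProduct.includeLeft
  have hiu : ∀ (x : E) (u : U), i x * (1 ⊗ₜ u) = (1 ⊗ₜ u) * i x := by
    intro x u; simp [i]
  let Φ (m : E ⊗[k] U) : E ⊗[k] E →ₗ[k] E ⊗[k] U := TensorProduct.lift
    (((LinearMap.mul k (E ⊗[k] U)).comp i.toLinearMap).compl₂
      (p.comp ((LinearMap.mulRight k m).comp i.toLinearMap)))
  have hΦ : ∀ m x y, Φ m (x ⊗ₜ y) = i x * p (i y * m) := fun m x y => rfl
  have hadd : ∀ m n s, Φ (m + n) s = Φ m s + Φ n s := by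
    intro m n s
    induction s with
    | zero => simp
    | add a b ha hb => simp only [map_add, ha, hb]; abel
    | tmul x y => simp [hΦ, mul_add]
  have hU : ∀ u m s, Φ ((1 ⊗ₜ u) * m) s = (1 ⊗ₜ u) * Φ m s := by
    intro u m s
    induction s with
    | zero => simp
    | add a b ha hb => simp only [map_add, ha, hb, mul_add]
    | tmul x y =>
      rw [hΦ, hΦ, ← mul_assoc, hiu, mul_assoc, hpu, ← mul_assoc, hiu, mul_assoc]
  have hE1 : ∀ c m s, Φ (i c * m) s = Φ m ((1 ⊗ₜ c) * s) := by
    intro c m s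
    induction s with
    | zero => simp
    | add a b ha hb => simp only [map_add, ha, hb, mul_add]
    | tmul x y =>
      rw [Algebra.TensorProduct.tmul_mul_tmul, hΦ, hΦ, ← mul_assoc, ← map_mul, one_mul, mul_comm y]
  have hE2 : ∀ c m s, i c * Φ m s = Φ m ((c ⊗ₜ 1) * s) := by
    intro c m s
    induction s with
    | zero => simp
    | add a b ha hb => simp only [map_add, ha, hb, mul_add]
    | tmul x y =>
      rw [Algebra.TensorProduct.tmul_mul_tmul, hΦ, hΦ, ← mul_assoc, ← map_mul, one_mul]
  have hE : ∀ c m, Φ (i c * m) t = i c * Φ m t := by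
    intro c m
    have h := ht c
    rw [sub_mul, sub_eq_zero] at h
    rw [hE1, hE2, h]
  have hJ : ∀ m s, Φ m s ∈ J := by
    intro m s
    induction s with
    | zero => simp
    | add a b ha hb => rw [map_add]; exact J.add_mem ha hb
    | tmul x y => exact Ideal.mul_mem_left J _ (hpJ _)
  have hid : ∀ m ∈ J, ∀ s, Φ m s = i (Algebra.TensorProduct.lmul' k s) * m := by
    intro m hm s
    induction s with
    | zero => simp
    | add a b ha hb => simp only [map_add, ha, hb, add_mul]
    | tmul x y => 
      rw [hΦ, hpid _ (Ideal.mul_mem_left J _ hm), Algebra.TensorProduct.lmul'_apply_tmul, map_mul,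
        mul_assoc]
  let P : (E ⊗[k] U) →ₗ[E ⊗[k] U] J :=
    { toFun := fun m => ⟨Φ m t, hJ m t⟩
      map_add' := fun m n => Subtype.ext (hadd m n t)
      map_smul' := by
        intro a m
        apply Subtype.ext
        change Φ (a * m) t = a * Φ m t
        induction a with
        | zero => 
          have := hadd 0 0 t
          simp at this
          simp [this]
        | add a b ha hb => rw [add_mul, hadd, ha, hb, add_mul]
        | tmul x u =>
          have : (x ⊗ₜ[k] u : E ⊗[k] U) = i x * (1 ⊗ₜ u) := by simp [i]
          rw [this, mul_assoc, hE, hU, mul_assoc] }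
  refine ⟨LinearMap.ker P, LinearMap.isCompl_of_proj (f := P) fun x => Subtype.ext ?_⟩
  change Φ x t = x
  rw [hid _ x.2, ht1, map_one, one_mul]

theorem aux_main (k F U : Type u) [Field k] [Field F] [Algebra k F] [Algebra.IsSeparable k F]
    [DivisionRing U] [Algebra k U]
    (hnoeth : IsNoetherianRing (F ⊗[k] U)) : IsSemisimpleRing (F ⊗[k] U) := by
  refine (isSemisimpleModule_iff _ _).mpr ⟨fun I => ?_⟩
  suffices h : ∃ e : F ⊗[k] U, IsIdempotentElem e ∧ I = Ideal.span {e} by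
    obtain ⟨e, he, rfl⟩ := h
    let P : (F ⊗[k] U) →ₗ[F ⊗[k] U] (Ideal.span {e} : Ideal (F ⊗[k] U)) :=
      (LinearMap.toSpanSingleton _ _ e).codRestrict _ fun c =>
        Ideal.mul_mem_left _ _ (Ideal.subset_span rfl)
    refine ⟨LinearMap.ker P, LinearMap.isCompl_of_proj (f := P) fun x => Subtype.ext ?_⟩
    obtain ⟨c, hc⟩ := Submodule.mem_span_singleton.mp x.2
    change x.1 * e = x.1
    rw [← hc, smul_eq_mul, mul_assoc, he.eq]
  obtain ⟨s, hs⟩ := (isNoetherianRing_iff_ideal_fg _).mp hnoeth I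
  obtain ⟨M, hM, hsM⟩ := TensorProduct.exists_finite_submodule_left_of_setFinite
    (s : Set (F ⊗[k] U)) s.finite_toSet
  obtain ⟨g, hg⟩ := (Module.Finite.iff_fg.mp hM)
  let E : IntermediateField k F := IntermediateField.adjoin k (g : Set F)
  have : FiniteDimensional k E := IntermediateField.finiteDimensional_adjoin
    fun x _ => Algebra.IsIntegral.isIntegral x
  have hME : ∀ x ∈ M, x ∈ E := by
    intro x hx
    rw [← hg] at hx
    have : Submodule.span k (g : Set F) ≤ Subalgebra.toSubmodule E.toSubalgebra :=
      Submodule.span_le.mpr (IntermediateField.subset_adjoin k _)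
    exact this hx
  let j : E ⊗[k] U →ₐ[k] F ⊗[k] U := Algebra.TensorProduct.map E.val (AlgHom.id k U)
  have hj : ∀ z : M ⊗[k] U, ∃ w, j w = M.subtype.rTensor U z := by
    intro z
    induction z with
    | zero => exact ⟨0, by simp⟩
    | add a b ha hb =>
      obtain ⟨a', ha⟩ := ha
      obtain ⟨b', hb⟩ := hb
      exact ⟨a' + b', by simp [ha, hb]⟩
    | tmul x y => exact ⟨(⟨x.1, hME _ x.2⟩ : E) ⊗ₜ y, by simp [j]⟩
  have := aux_fin k E U
  obtain ⟨e, he, hJ⟩ := IsSemisimpleRing.ideal_eq_span_idempotent (Ideal.span (Set.preimage j s))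
  refine ⟨j e, he.map j, ?_⟩
  have h1 : ((s : Set (F ⊗[k] U))) = Set.image j (Set.preimage j s) := by
    rw [Set.image_preimage_eq_of_subset]
    intro x hx
    obtain ⟨z, rfl⟩ := hsM hx
    exact hj z
  have h2 := congrArg (Ideal.map j) hJ
  rw [Ideal.map_span, Ideal.map_span, ← h1, Set.image_singleton] at h2
  rw [← h2, ← hs]

theorem aux_inj (R : Type u) [Ring R] [IsSemisimpleRing R] : Ring.selfInjDim R = 0 := by
  have h := Module.injective_of_isSemisimpleRing R R
  have : Injective (ModuleCat.of R R) := Module.injective_object_of_injective_module R R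
  refine le_antisymm (sInf_le ⟨InjectiveResolution.self _, fun i hi => ?_⟩) bot_le
  apply HomologicalComplex.isZero_single_obj_X
  rintro rfl
  simp at hi

theorem aux_gl (R : Type u) [Ring R] [IsSemisimpleRing R] : Ring.globalDim R = 0 := by
  refine le_antisymm (iSup_le fun M => ?_) bot_le
  have := Module.projective_of_isSemisimpleRing R M
  have : Projective M := inferInstance
  refine sInf_le ⟨ProjectiveResolution.self _, fun i hi => ?_⟩
  apply HomologicalComplex.isZero_single_obj_X
  rintro rfl
  simp at hi

/-- from the proof of Proposition 7.1(c): let `F` be a separable algebraic field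
extension of `k` of countably infinite dimension and let `U` be a division `k`-algebra such
that `F ⊗[k] U` is left noetherian.  Then `F ⊗[k] U` is a semisimple artinian ring; in
particular its self-injective dimension and its global dimension are `0`. -/
theorem stmt_19 (k F : Type u) [Field k] [Field F] [Algebra k F] [Algebra.IsSeparable k F]
    (hdim : Module.rank k F = Cardinal.aleph0)
    (U : Type u) [DivisionRing U] [Algebra k U]
    (hnoeth : IsNoetherianRing (F ⊗[k] U)) :
    IsSemisimpleRing (F ⊗[k] U) ∧
      Ring.selfInjDim (F ⊗[k] U) = 0 ∧
      Ring.globalDim (F ⊗[k] U) = 0 := by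
  have := aux_main k F U hnoeth
  exact ⟨this, aux_inj _, aux_gl _⟩
end
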